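/- Let (Ω, μ) be a probability space, T : Ω → Ω an ergodic measure-preserving transformation, and A : Ω → GL(d, ℝ) a measurable linear cocycle with ∫_Ω log⁺‖A(ω)‖ dμ(ω) < ∞. Then there exist an integer k ≥ 1, numbers λ₁ > λ₂ > ⋯ > λ_k with λ₁, …, λ_{k−1} ∈ ℝ and λ_k ∈ ℝ ∪ {−∞}, and for μ-almost every ω ∈ Ω a filtration of linear subspaces 0 ⊊ V_k(ω) ⊊ V_{k−1}(ω) ⊊ ⋯ ⊊ V_1(ω) = ℝ^d, measurable in ω, such that A(ω) V_i(ω) = V_i(Tω) for a.e. ω and every i, and for every vector v ∈ V_i(ω) \ V_{i+1}(ω) (with the convention V_{k+1}(ω) = 0), lim_{N→∞} (1/N) log ‖A^N(ω) v‖ = λ_i. -/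

import Mathlib

/-!
By Kingman's subadditive ergodic theorem, applied to the logarithm of the `m`-dimensional volume
growth of the iterates for every `m`, the singular values of `A^N(ω)` have almost surely constant
exponential rates. Consider the top rate. The singular values of smaller rate span a subspace
`W_N(ω)`, and consecutive `W_N(ω)`, `W_{N+1}(ω)` differ by an exponentially small amount because of
the gap between the rates and because `log⁺ ‖A (T^N ω)‖ = o(N)`. Hence the `W_N(ω)` converge, and
their limit `W(ω)` consists of the vectors that do not grow at the top rate; in particular it is
invariant. It is measurable in `ω`, as the orthogonal projection onto it is a limit of resolvents
`(1 + c_N X_N* X_N)⁻¹` with `X_N = A^N(ω)`. Restricting the cocycle to `W` and arguing by induction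
on the dimension gives the whole filtration.
-/

open MeasureTheory Filter Topology

/-- The operator norm of a square real matrix, with respect to Euclidean norms. -/
noncomputable def matOpNorm {d : ℕ} (M : Matrix (Fin d) (Fin d) ℝ) : ℝ :=
  ‖Matrix.toEuclideanCLM (𝕜 := ℝ) M‖

/-- The cocycle iterates `A^N(ω) = A(T^{N-1} ω) ⋯ A(T ω) A(ω)`. -/
noncomputable def cocycIter {Ω : Type*} {d : ℕ} (T : Ω → Ω)
    (A : Ω → Matrix (Fin d) (Fin d) ℝ) : ℕ → Ω → Matrix (Fin d) (Fin d) ℝ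
  | 0, _ => 1
  | n + 1, ω => cocycIter T A n (T ω) * A ω

section Birkhoff

variable {Ω : Type*} {T : Ω → Ω}

/-- The largest of the first `n + 1` Birkhoff sums of `h`, as a recursion along the orbit. -/
noncomputable def birkhoffMax (T : Ω → Ω) (h : Ω → ℝ) : ℕ → Ω → ℝ
  | 0, _ => 0
  | n + 1, ω => max 0 (h ω + birkhoffMax T h n (T ω))

theorem birkhoffMax_nonneg (h : Ω → ℝ) (n : ℕ) (ω : Ω) : 0 ≤ birkhoffMax T h n ω := by
  cases n with
  | zero => exact le_rfl
  | succ n => exact le_max_left _ _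

theorem birkhoffMax_le_succ (h : Ω → ℝ) (n : ℕ) (ω : Ω) :
    birkhoffMax T h n ω ≤ birkhoffMax T h (n + 1) ω := by
  induction n generalizing ω with
  | zero => exact birkhoffMax_nonneg h 1 ω
  | succ n ih => exact max_le_max le_rfl (by gcongr; exact ih (T ω))

theorem birkhoffSum_le_birkhoffMax (h : Ω → ℝ) (n : ℕ) (ω : Ω) :
    birkhoffSum T h n ω ≤ birkhoffMax T h n ω := by
  induction n generalizing ω with
  | zero => simp [birkhoffMax]
  | succ n ih =>
    rw [birkhoffSum_succ']
    exact le_max_of_le_right (by gcongr; exact ih (T ω))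

theorem abs_birkhoffMax_succ_sub_le (h : Ω → ℝ) (n : ℕ) (ω : Ω) :
    |birkhoffMax T h (n + 1) ω - birkhoffMax T h n (T ω)| ≤ |h ω| := by
  have hnonneg := birkhoffMax_nonneg (T := T) h n (T ω)
  rw [birkhoffMax, abs_le]
  constructor
  · linarith [le_max_right 0 (h ω + birkhoffMax T h n (T ω)), neg_abs_le (h ω)]
  · rw [sub_le_iff_le_add]
    exact max_le (by positivity) (by linarith [le_abs_self (h ω)])

theorem eventually_birkhoffMax_succ_sub_eq {h : Ω → ℝ} {ω : Ω}
    (hω : ¬ BddAbove (Set.range fun n => birkhoffSum T h n (T ω))) :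
    ∀ᶠ n in atTop, birkhoffMax T h (n + 1) ω - birkhoffMax T h n (T ω) = h ω := by
  obtain ⟨_, ⟨N, rfl⟩, hN⟩ := not_bddAbove_iff.mp hω (-h ω)
  filter_upwards [eventually_ge_atTop N] with n hn
  have hmono : birkhoffMax T h N (T ω) ≤ birkhoffMax T h n (T ω) :=
    monotone_nat_of_le_succ (f := fun k => birkhoffMax T h k (T ω))
      (fun k => birkhoffMax_le_succ h k (T ω)) hn
  have hsum := birkhoffSum_le_birkhoffMax (T := T) h N (T ω)
  rw [birkhoffMax, max_eq_right (by linarith), add_sub_cancel_right]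

theorem bddAbove_range_birkhoffSum_apply_iff (h : Ω → ℝ) (ω : Ω) :
    BddAbove (Set.range fun n => birkhoffSum T h n (T ω)) ↔
      BddAbove (Set.range fun n => birkhoffSum T h n ω) := by
  simp only [bddAbove_def, Set.forall_mem_range]
  constructor
  · rintro ⟨C, hC⟩
    refine ⟨max 0 (h ω + C), fun n => ?_⟩
    cases n with
    | zero => simp
    | succ n =>
      rw [birkhoffSum_succ']
      exact le_max_of_le_right (by gcongr; exact hC n)
  · rintro ⟨C, hC⟩
    refine ⟨C - h ω, fun n => ?_⟩
    have hsucc := hC (n + 1)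
    rw [birkhoffSum_succ'] at hsucc
    linarith

variable [MeasurableSpace Ω] {μ : Measure Ω}

theorem integrable_birkhoffMax (hT : MeasurePreserving T μ μ) {h : Ω → ℝ} (hh : Integrable h μ)
    (n : ℕ) : Integrable (birkhoffMax T h n) μ := by
  induction n with
  | zero => exact integrable_zero _ _ _
  | succ n ih => exact (integrable_zero _ _ _).sup (hh.add (hT.integrable_comp_of_integrable ih))

theorem integral_birkhoffMax_succ_sub_nonneg (hT : MeasurePreserving T μ μ) {h : Ω → ℝ}
    (hh : Integrable h μ) (n : ℕ) :
    0 ≤ ∫ ω, (birkhoffMax T h (n + 1) ω - birkhoffMax T h n (T ω)) ∂μ := by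
  have hn := integrable_birkhoffMax hT hh n
  have hn_succ := integrable_birkhoffMax hT hh (n + 1)
  have hn_comp : Integrable (fun ω => birkhoffMax T h n (T ω)) μ :=
    hT.integrable_comp_of_integrable hn
  have hcomp : ∫ ω, birkhoffMax T h n (T ω) ∂μ = ∫ ω, birkhoffMax T h n ω ∂μ := by
    rw [← integral_map hT.aemeasurable (hT.map_eq.symm ▸ hn.aestronglyMeasurable), hT.map_eq]
  rw [integral_sub hn_succ hn_comp, hcomp, sub_nonneg]
  exact integral_mono hn hn_succ (birkhoffMax_le_succ h n)

theorem integral_nonneg_of_ae_not_bddAbove_birkhoffSum (hT : MeasurePreserving T μ μ) {h : Ω → ℝ}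
    (hh : Integrable h μ)
    (hub : ∀ᵐ ω ∂μ, ¬ BddAbove (Set.range fun n => birkhoffSum T h n ω)) :
    0 ≤ ∫ ω, h ω ∂μ := by
  refine ge_of_tendsto' (tendsto_integral_of_dominated_convergence (fun ω => |h ω|) (fun n => ?_)
    hh.abs (fun n => .of_forall (abs_birkhoffMax_succ_sub_le h n)) ?_)
    (integral_birkhoffMax_succ_sub_nonneg hT hh)
  · exact ((integrable_birkhoffMax hT hh (n + 1)).sub
      (hT.integrable_comp_of_integrable (integrable_birkhoffMax hT hh n))).aestronglyMeasurable
  · filter_upwards [hub] with ω hω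
    rw [← bddAbove_range_birkhoffSum_apply_iff] at hω
    exact tendsto_const_nhds.congr'
      ((eventually_birkhoffMax_succ_sub_eq hω).mono fun _ => Eq.symm)

theorem ae_bddAbove_birkhoffSum (hT : Ergodic T μ) {h : Ω → ℝ} (hh : Integrable h μ)
    (hneg : ∫ ω, h ω ∂μ < 0) :
    ∀ᵐ ω ∂μ, BddAbove (Set.range fun n => birkhoffSum T h n ω) := by
  have hmeas : NullMeasurableSet {ω | BddAbove (Set.range fun n => birkhoffSum T h n ω)} μ := by
    have hsum : ∀ n, AEMeasurable (birkhoffSum T h n) μ := fun n =>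
      Finset.aemeasurable_fun_sum _ fun k _ =>
        ((hT.toMeasurePreserving.iterate k).integrable_comp_of_integrable hh).aemeasurable
    exact measurableSet_bddAbove_range (δ := NullMeasurableSpace Ω μ) fun n =>
      (hsum n).nullMeasurable
  have hinv : T ⁻¹' {ω | BddAbove (Set.range fun n => birkhoffSum T h n ω)} =
      {ω | BddAbove (Set.range fun n => birkhoffSum T h n ω)} :=
    Set.ext fun ω => bddAbove_range_birkhoffSum_apply_iff h ω
  refine (hT.quasiErgodic.ae_mem_or_ae_notMem₀ hmeas hinv.eventuallyEq).resolve_right fun hub => ?_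
  exact hneg.not_ge (integral_nonneg_of_ae_not_bddAbove_birkhoffSum hT.toMeasurePreserving hh hub)

variable [IsProbabilityMeasure μ]

theorem ae_eventually_birkhoffSum_le (hT : Ergodic T μ) {g : Ω → ℝ} (hg : Integrable g μ) {c : ℝ}
    (hc : ∫ ω, g ω ∂μ < c) :
    ∀ᵐ ω ∂μ, ∀ᶠ n : ℕ in atTop, birkhoffSum T g n ω ≤ c * n := by
  obtain ⟨b, hb, hbc⟩ := exists_between hc
  have hbdd := ae_bddAbove_birkhoffSum hT (h := fun ω => g ω - b) (hg.sub (integrable_const b)) (by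
    rw [integral_sub hg (integrable_const b)]
    simpa using hb)
  filter_upwards [hbdd] with ω ⟨C, hC⟩
  have hlarge : ∀ᶠ n : ℕ in atTop, C ≤ (c - b) * n :=
    (tendsto_natCast_atTop_atTop.const_mul_atTop (sub_pos.mpr hbc)).eventually_ge_atTop C
  filter_upwards [hlarge] with n hn
  have hle : birkhoffSum T (fun ω => g ω - b) n ω ≤ C := hC ⟨n, rfl⟩
  have heq : birkhoffSum T (fun ω => g ω - b) n ω = birkhoffSum T g n ω - n * b := by
    simp [birkhoffSum]
  linarith

/-- **Birkhoff's pointwise ergodic theorem** for ergodic maps. -/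
theorem ae_tendsto_birkhoffSum_div (hT : Ergodic T μ) {g : Ω → ℝ} (hg : Integrable g μ) :
    ∀ᵐ ω ∂μ, Tendsto (fun n : ℕ => birkhoffSum T g n ω / n) atTop (𝓝 (∫ ω, g ω ∂μ)) := by
  have hupper : ∀ᵐ ω ∂μ, ∀ k : ℕ, ∀ᶠ n : ℕ in atTop,
      birkhoffSum T g n ω ≤ (∫ ω, g ω ∂μ + 1 / (k + 1)) * n :=
    ae_all_iff.mpr fun k => ae_eventually_birkhoffSum_le hT hg
      (lt_add_of_pos_right _ Nat.one_div_pos_of_nat)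
  have hlower : ∀ᵐ ω ∂μ, ∀ k : ℕ, ∀ᶠ n : ℕ in atTop,
      birkhoffSum T (-g) n ω ≤ (-∫ ω, g ω ∂μ + 1 / (k + 1)) * n :=
    ae_all_iff.mpr fun k => ae_eventually_birkhoffSum_le hT hg.neg (by
      rw [integral_neg']
      exact lt_add_of_pos_right _ Nat.one_div_pos_of_nat)
  filter_upwards [hupper, hlower] with ω hωu hωl
  rw [Metric.tendsto_nhds]
  intro ε hε
  obtain ⟨k, hk⟩ := exists_nat_one_div_lt hε
  filter_upwards [hωu k, hωl k, eventually_gt_atTop 0] with n hnu hnl hn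
  have hn' : (0 : ℝ) < n := by exact_mod_cast hn
  rw [birkhoffSum_neg] at hnl
  rw [Real.dist_eq, abs_lt, lt_sub_iff_add_lt, lt_div_iff₀ hn', sub_lt_iff_lt_add,
    div_lt_iff₀ hn']
  constructor <;> nlinarith

theorem ae_tendsto_sum_Ico_iterate_div (hT : Ergodic T μ) {g : Ω → ℝ} (hg : Integrable g μ)
    (M : ℕ) :
    ∀ᵐ ω ∂μ, Tendsto (fun n : ℕ => (∑ j ∈ Finset.Ico (n - M) n, g (T^[j] ω)) / n)
      atTop (𝓝 0) := by
  filter_upwards [ae_tendsto_birkhoffSum_div hT hg] with ω hω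
  have hratio : Tendsto (fun n : ℕ => ((n - M : ℕ) : ℝ) / n) atTop (𝓝 1) := by
    have hsub : Tendsto (fun n : ℕ => 1 - (M : ℝ) / n) atTop (𝓝 (1 - 0)) :=
      tendsto_const_nhds.sub (tendsto_const_div_atTop_nhds_zero_nat _)
    rw [sub_zero] at hsub
    refine hsub.congr' ?_
    filter_upwards [eventually_gt_atTop 0, eventually_ge_atTop M] with n hn hnM
    rw [Nat.cast_sub hnM, sub_div, div_self (by positivity)]
  have hdiff := hω.sub ((hω.comp (tendsto_sub_atTop_nat M)).mul hratio)
  rw [mul_one, sub_self] at hdiff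
  refine hdiff.congr' ?_
  filter_upwards [eventually_gt_atTop M] with n hn
  have hne : ((n - M : ℕ) : ℝ) ≠ 0 := by exact_mod_cast (Nat.sub_pos_of_lt hn).ne'
  rw [Finset.sum_Ico_eq_sub _ (Nat.sub_le n M), Function.comp_apply, div_mul_div_cancel₀ hne,
    ← sub_div]
  rfl

end Birkhoff

section Kingman

theorem le_sum_Ico_of_exists_block {v : ℕ → ℕ → ℝ} {w : ℕ → ℝ} {N : ℕ} (hv : v N N ≤ 0)
    (hadd : ∀ i j, i ≤ j → j ≤ N → v i N ≤ v i j + v j N)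
    (hblock : ∀ i < N, ∃ j, i < j ∧ j ≤ N ∧ v i j ≤ ∑ k ∈ Finset.Ico i j, w k) {i : ℕ}
    (hi : i ≤ N) : v i N ≤ ∑ k ∈ Finset.Ico i N, w k := by
  induction hn : N - i using Nat.strong_induction_on generalizing i with
  | _ n ih =>
    obtain rfl | hiN := hi.eq_or_lt
    · simpa using hv
    obtain ⟨j, hij, hjN, hj⟩ := hblock i hiN
    calc v i N ≤ v i j + v j N := hadd i j hij.le hjN
      _ ≤ ∑ k ∈ Finset.Ico i j, w k + ∑ k ∈ Finset.Ico j N, w k :=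
        add_le_add hj (ih (N - j) (by omega) hjN rfl)
      _ = ∑ k ∈ Finset.Ico i N, w k := Finset.sum_Ico_consecutive w hij.le hjN

theorem liminf_div_natCast_le_of_le_add {x y : ℕ → ℝ} {C : ℝ} (h : ∀ n, x (n + 1) ≤ C + y n) :
    liminf (fun n : ℕ => ((x n / n : ℝ) : EReal)) atTop ≤
      liminf (fun n : ℕ => ((y n / n : ℝ) : EReal)) atTop := by
  refine le_of_forall_gt fun c hc => ?_
  obtain ⟨b, hyb, hbc⟩ := EReal.lt_iff_exists_real_btwn.mp hc
  obtain ⟨a, hba, hac⟩ := EReal.lt_iff_exists_real_btwn.mp hbc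
  rw [EReal.coe_lt_coe_iff] at hba
  refine lt_of_le_of_lt ?_ hac
  have hsmall : Tendsto (fun n : ℕ => (C + |b|) / (n + 1 : ℝ)) atTop (𝓝 0) := by
    simpa [Function.comp_def] using
      (tendsto_const_div_atTop_nhds_zero_nat (C + |b|)).comp (tendsto_add_atTop_nat 1)
  have hfreq := (frequently_lt_of_liminf_lt (by isBoundedDefault) hyb).and_eventually
    ((hsmall.eventually (gt_mem_nhds (sub_pos.mpr hba))).and (eventually_gt_atTop 0))
  refine liminf_le_of_frequently_le (Frequently.filter_mono ?_ (tendsto_add_atTop_nat 1))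
    (by isBoundedDefault)
  rw [frequently_map]
  refine hfreq.mono fun n ⟨hy, hC, hn⟩ => ?_
  have hn' : (0 : ℝ) < n := by exact_mod_cast hn
  rw [EReal.coe_lt_coe_iff, div_lt_iff₀ hn'] at hy
  rw [div_lt_iff₀ (by positivity)] at hC
  rw [EReal.coe_le_coe_iff, div_le_iff₀ (by positivity)]
  push_cast
  nlinarith [h n, le_abs_self b, neg_abs_le b]

variable {Ω : Type*} [MeasurableSpace Ω] {μ : Measure Ω} {T : Ω → Ω}

theorem ae_forall_iterate (hT : MeasurePreserving T μ μ) {p : Ω → Prop} (h : ∀ᵐ ω ∂μ, p ω) :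
    ∀ᵐ ω ∂μ, ∀ n, p (T^[n] ω) :=
  ae_all_iff.mpr fun n => (hT.iterate n).quasiMeasurePreserving.ae h

theorem ae_eq_comp_of_ae_le_comp [IsFiniteMeasure μ] (hT : MeasurePreserving T μ μ) {α : Type*}
    [TopologicalSpace α] [LinearOrder α] [OrderClosedTopology α] [DenselyOrdered α]
    [TopologicalSpace.SeparableSpace α] [MeasurableSpace α] [OpensMeasurableSpace α]
    {F : Ω → α} (hF : Measurable F) (hle : ∀ᵐ ω ∂μ, F ω ≤ F (T ω)) :
    F ∘ T =ᵐ[μ] F := by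
  obtain ⟨s, hs, hdense⟩ := TopologicalSpace.exists_countable_dense α
  have hlevel : ∀ᵐ ω ∂μ, ∀ q ∈ s, F ω < q → F (T ω) < q := by
    refine (ae_ball_iff hs).mpr fun q _ => ?_
    have hmeas : MeasurableSet {ω | F ω < q} := hF measurableSet_Iio
    have hsub : T ⁻¹' {ω | F ω < q} ≤ᵐ[μ] {ω | F ω < q} :=
      hle.mono fun ω hω (hlt : F (T ω) < q) => hω.trans_lt hlt
    exact (ae_eq_of_ae_subset_of_measure_ge hsub (hT.measure_preimage hmeas.nullMeasurableSet).ge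
      (hT.measurable hmeas).nullMeasurableSet (measure_ne_top _ _)).symm.le
  filter_upwards [hle, hlevel] with ω hω hq
  refine (hω.eq_or_lt.resolve_right fun hlt => ?_).symm
  obtain ⟨q, hqs, hq1, hq2⟩ := hdense.exists_between hlt
  exact (hq q hqs hq1).not_gt hq2

/-- A subadditive process over `T`, normalised by `f 0 ≤ 0` and with `(f 1)⁺` integrable: the
setting of Kingman's subadditive ergodic theorem. -/
structure IsSubadditiveProcess (μ : Measure Ω) (T : Ω → Ω) (f : ℕ → Ω → ℝ) : Prop where
  measurable : ∀ n, Measurable (f n)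
  zero_nonpos : ∀ᵐ ω ∂μ, f 0 ω ≤ 0
  add_le : ∀ᵐ ω ∂μ, ∀ m n, f (m + n) ω ≤ f m ω + f n (T^[m] ω)
  integrable_posPart : Integrable (fun ω => max (f 1 ω) 0) μ

namespace IsSubadditiveProcess

variable {f : ℕ → Ω → ℝ}

-- Cut the orbit segment into blocks of length at most `M` on which `f` is nonpositive, and single
-- steps at times in `B` or in the last `M` times.
theorem ae_le_birkhoffSum_add_tail (hf : IsSubadditiveProcess μ T f)
    (hT : MeasurePreserving T μ μ) {B : Set Ω} {M : ℕ}
    (hB : ∀ ω ∉ B, ∃ m, 1 ≤ m ∧ m ≤ M ∧ f m ω ≤ 0) :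
    ∀ᵐ ω ∂μ, ∀ n, f n ω ≤ birkhoffSum T (B.indicator fun ω => max (f 1 ω) 0) n ω +
      ∑ j ∈ Finset.Ico (n - M) n, max (f 1 (T^[j] ω)) 0 := by
  filter_upwards [ae_forall_iterate hT hf.zero_nonpos, ae_forall_iterate hT hf.add_le]
    with ω hzero hadd n
  set g : Ω → ℝ := fun ω => max (f 1 ω) 0
  have hg : ∀ ω, 0 ≤ g ω := fun ω => le_max_right _ _
  have hBg : ∀ ω, 0 ≤ B.indicator g ω := fun ω => Set.indicator_nonneg (fun x _ => hg x) ω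
  set w : ℕ → ℝ := fun k => B.indicator g (T^[k] ω) + if n - M ≤ k then g (T^[k] ω) else 0 with hw
  have hw_nonneg : ∀ k, 0 ≤ w k := fun k =>
    add_nonneg (hBg _) (by split_ifs <;> [exact hg _; exact le_rfl])
  have hw_sum : ∑ k ∈ Finset.Ico 0 n, w k = birkhoffSum T (B.indicator g) n ω +
      ∑ j ∈ Finset.Ico (n - M) n, g (T^[j] ω) := by
    rw [Finset.sum_add_distrib, ← Finset.sum_filter, Finset.Ico_filter_le, Nat.zero_max,
      ← Finset.range_eq_Ico, birkhoffSum]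
  have hstep : ∀ i, T^[i] ω ∈ B ∨ n - M ≤ i → f 1 (T^[i] ω) ≤ w i := by
    rintro i (hi | hi)
    · simp only [hw, Set.indicator_of_mem hi]
      exact le_add_of_le_of_nonneg (le_max_left _ _) (by split_ifs <;> [exact hg _; exact le_rfl])
    · simp only [hw, if_pos hi]
      exact le_add_of_nonneg_of_le (hBg _) (le_max_left _ _)
  have hmain := le_sum_Ico_of_exists_block (v := fun i j => f (j - i) (T^[i] ω)) (w := w) (N := n)
    (i := 0) (by simpa using hzero n) (fun i j hij hjn => ?_) (fun i hi => ?_) n.zero_le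
  · simpa only [hw_sum, Nat.sub_zero, Function.iterate_zero_apply] using hmain
  · have hblock := hadd i (j - i) (n - j)
    rwa [← Function.iterate_add_apply, Nat.sub_add_cancel hij, add_comm (j - i),
      Nat.sub_add_sub_cancel hjn hij] at hblock
  · by_cases hiB : T^[i] ω ∈ B ∨ n - M ≤ i
    · exact ⟨i + 1, i.lt_succ_self, hi, by simpa using hstep i hiB⟩
    · rw [not_or, not_le] at hiB
      obtain ⟨m, hm1, hmM, hm⟩ := hB _ hiB.1
      refine ⟨i + m, by omega, by omega, ?_⟩
      rw [Nat.add_sub_cancel_left]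
      exact hm.trans (Finset.sum_nonneg fun k _ => hw_nonneg k)

theorem ae_le_birkhoffSum (hf : IsSubadditiveProcess μ T f) (hT : MeasurePreserving T μ μ) :
    ∀ᵐ ω ∂μ, ∀ n, f n ω ≤ birkhoffSum T (fun ω => max (f 1 ω) 0) n ω := by
  simpa using hf.ae_le_birkhoffSum_add_tail hT (B := Set.univ) (M := 0)
    fun ω hω => absurd (Set.mem_univ ω) hω

theorem sub_const_mul [IsFiniteMeasure μ] (hf : IsSubadditiveProcess μ T f) (c : ℝ) :
    IsSubadditiveProcess μ T fun n ω => f n ω - c * n where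
  measurable n := (hf.measurable n).sub_const _
  zero_nonpos := hf.zero_nonpos.mono fun ω hω => by simpa using hω
  add_le := hf.add_le.mono fun ω hω m n => by push_cast; linarith [hω m n]
  integrable_posPart := by
    refine (hf.integrable_posPart.add (integrable_const |c|)).mono'
      (((hf.measurable 1).sub_const _).max measurable_const).aestronglyMeasurable
      (.of_forall fun ω => ?_)
    rw [Real.norm_of_nonneg (le_max_right _ _), Nat.cast_one, mul_one]
    exact max_le (sub_eq_add_neg (f 1 ω) c ▸ add_le_add (le_max_left _ _) (neg_le_abs c))
      (add_nonneg (le_max_right _ _) (abs_nonneg c))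

theorem measurableSet_forall_pos (hf : IsSubadditiveProcess μ T f) (M : ℕ) :
    MeasurableSet {ω | ∀ m, 1 ≤ m → m ≤ M → 0 < f m ω} := by
  simp only [Set.ofPred_forall]
  exact .iInter fun m => .iInter fun _ => .iInter fun _ =>
    measurableSet_lt measurable_const (hf.measurable m)

theorem tendsto_integral_indicator_forall_pos (hf : IsSubadditiveProcess μ T f)
    (hex : ∀ᵐ ω ∂μ, ∃ n, 1 ≤ n ∧ f n ω ≤ 0) :
    Tendsto (fun M => ∫ ω, {ω | ∀ m, 1 ≤ m → m ≤ M → 0 < f m ω}.indicator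
      (fun ω => max (f 1 ω) 0) ω ∂μ) atTop (𝓝 0) := by
  have hnonneg : ∀ ω, 0 ≤ max (f 1 ω) 0 := fun ω => le_max_right _ _
  suffices hlim : Tendsto (fun M => ∫ ω, {ω | ∀ m, 1 ≤ m → m ≤ M → 0 < f m ω}.indicator
      (fun ω => max (f 1 ω) 0) ω ∂μ) atTop (𝓝 (∫ _, (0 : ℝ) ∂μ)) by
    simpa only [integral_zero] using hlim
  refine tendsto_integral_of_dominated_convergence (fun ω => max (f 1 ω) 0)
    (fun M =>
      (hf.integrable_posPart.indicator (hf.measurableSet_forall_pos M)).aestronglyMeasurable)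
    hf.integrable_posPart (fun M => .of_forall fun ω => ?_) ?_
  · rw [Real.norm_of_nonneg (Set.indicator_nonneg (fun x _ => hnonneg x) ω)]
    exact Set.indicator_le_self' (fun x _ => hnonneg x) ω
  · filter_upwards [hex] with ω ⟨m, hm1, hm⟩
    refine tendsto_const_nhds.congr' ?_
    filter_upwards [eventually_ge_atTop m] with M hM
    exact (Set.indicator_of_notMem (fun hω => (hω m hm1 hM).not_ge hm) _).symm

variable [IsProbabilityMeasure μ]

theorem ae_eventually_le (hf : IsSubadditiveProcess μ T f) (hT : Ergodic T μ)
    (hex : ∀ᵐ ω ∂μ, ∃ n, 1 ≤ n ∧ f n ω ≤ 0) {ε : ℝ} (hε : 0 < ε) :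
    ∀ᵐ ω ∂μ, ∀ᶠ n : ℕ in atTop, f n ω ≤ ε * n := by
  obtain ⟨M, hM⟩ := ((hf.tendsto_integral_indicator_forall_pos hex).eventually
    (gt_mem_nhds (half_pos hε))).exists
  set B : Set Ω := {ω | ∀ m, 1 ≤ m → m ≤ M → 0 < f m ω} with hB
  filter_upwards [hf.ae_le_birkhoffSum_add_tail hT.toMeasurePreserving (B := B) (M := M)
      fun ω hω => by simpa [hB] using hω,
    ae_eventually_birkhoffSum_le hT
      (hf.integrable_posPart.indicator (hf.measurableSet_forall_pos M)) hM,
    ae_tendsto_sum_Ico_iterate_div hT hf.integrable_posPart M] with ω hle hsum htail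
  filter_upwards [hsum, htail.eventually (gt_mem_nhds (half_pos hε)), eventually_gt_atTop 0]
    with n hn_sum hn_tail hn
  rw [div_lt_iff₀ (by exact_mod_cast hn)] at hn_tail
  linarith [hle n]

theorem ae_eventually_div_le (hf : IsSubadditiveProcess μ T f) (hT : Ergodic T μ) {c c' : ℝ}
    (hc : ∀ᵐ ω ∂μ, liminf (fun n : ℕ => ((f n ω / n : ℝ) : EReal)) atTop < c) (hcc' : c < c') :
    ∀ᵐ ω ∂μ, ∀ᶠ n : ℕ in atTop, f n ω / n ≤ c' := by
  have hex : ∀ᵐ ω ∂μ, ∃ n : ℕ, 1 ≤ n ∧ f n ω - c * n ≤ 0 := by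
    filter_upwards [hc] with ω hω
    obtain ⟨n, hlt, hn⟩ := ((frequently_lt_of_liminf_lt (by isBoundedDefault) hω).and_eventually
      (eventually_ge_atTop 1)).exists
    rw [EReal.coe_lt_coe_iff, div_lt_iff₀ (by exact_mod_cast hn)] at hlt
    exact ⟨n, hn, sub_nonpos.mpr hlt.le⟩
  filter_upwards [(hf.sub_const_mul c).ae_eventually_le hT hex (sub_pos.mpr hcc')] with ω hω
  filter_upwards [hω, eventually_gt_atTop 0] with n hle hn
  rw [div_le_iff₀ (by exact_mod_cast hn)]
  linarith

theorem exists_ae_liminf_div_eq (hf : IsSubadditiveProcess μ T f) (hT : Ergodic T μ) :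
    ∃ L : EReal, L ≠ ⊤ ∧
      ∀ᵐ ω ∂μ, liminf (fun n : ℕ => ((f n ω / n : ℝ) : EReal)) atTop = L := by
  set F : Ω → EReal := fun ω => liminf (fun n : ℕ => ((f n ω / n : ℝ) : EReal)) atTop
  have hF : Measurable F := .liminf fun n => ((hf.measurable n).div_const _).coe_real_ereal
  have hF_le : ∀ᵐ ω ∂μ, F ω ≤ F (T ω) := hf.add_le.mono fun ω hω =>
    liminf_div_natCast_le_of_le_add fun n => by simpa [add_comm] using hω 1 n
  obtain ⟨L, hL⟩ := hT.ae_eq_const_of_ae_eq_comp₀ hF.nullMeasurable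
    (ae_eq_comp_of_ae_le_comp hT.toMeasurePreserving hF hF_le)
  refine ⟨L, ?_, hL⟩
  obtain ⟨ω, hω, hle, hsum⟩ := (hL.and ((hf.ae_le_birkhoffSum hT.toMeasurePreserving).and
    (ae_tendsto_birkhoffSum_div hT hf.integrable_posPart))).exists
  have hbound : F ω ≤ ((∫ ω, max (f 1 ω) 0 ∂μ : ℝ) : EReal) := by
    rw [← (EReal.tendsto_coe.mpr hsum).liminf_eq]
    refine liminf_le_liminf (.of_forall fun n => EReal.coe_le_coe_iff.mpr ?_)
    exact div_le_div_of_nonneg_right (hle n) n.cast_nonneg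
  exact (hω ▸ hbound.trans_lt (EReal.coe_lt_top _)).ne

/-- **Kingman's subadditive ergodic theorem** for ergodic maps; the limit may be `-∞`. -/
theorem exists_ae_tendsto_div (hf : IsSubadditiveProcess μ T f) (hT : Ergodic T μ) :
    ∃ L : EReal, L ≠ ⊤ ∧
      ∀ᵐ ω ∂μ, Tendsto (fun n : ℕ => ((f n ω / n : ℝ) : EReal)) atTop (𝓝 L) := by
  obtain ⟨L, hL_top, hL⟩ := hf.exists_ae_liminf_div_eq hT
  refine ⟨L, hL_top, ?_⟩
  have hupper : ∀ᵐ ω ∂μ, ∀ q : ℚ, L < ((q : ℝ) : EReal) →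
      ∀ᶠ n : ℕ in atTop, f n ω / n ≤ q := by
    refine ae_all_iff.mpr fun q => ?_
    by_cases hq : L < ((q : ℝ) : EReal)
    · obtain ⟨c, hLc, hcq⟩ := EReal.lt_iff_exists_real_btwn.mp hq
      filter_upwards [hf.ae_eventually_div_le hT (hL.mono fun ω hω => hω.trans_lt hLc)
        (EReal.coe_lt_coe_iff.mp hcq)] with ω hω _ using hω
    · exact .of_forall fun ω hq' => absurd hq' hq
  filter_upwards [hL, hupper] with ω hω hωq
  refine tendsto_of_le_liminf_of_limsup_le hω.ge (le_of_forall_gt_imp_ge_of_dense fun c hc => ?_)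
  obtain ⟨q, hLq, hqc⟩ := EReal.lt_iff_exists_rat_btwn.mp hc
  refine (limsup_le_of_le (by isBoundedDefault) ?_).trans hqc.le
  exact (hωq q hLq).mono fun n hn => EReal.coe_le_coe_iff.mpr hn

end IsSubadditiveProcess

end Kingman

section SingularValues

open Module

open scoped InnerProductSpace

variable {E F G : Type*} [NormedAddCommGroup E] [InnerProductSpace ℝ E]
  [NormedAddCommGroup F] [InnerProductSpace ℝ F] [NormedAddCommGroup G] [InnerProductSpace ℝ G]

theorem exists_mem_ne_zero_forall_inner_eq_zero (U : Submodule ℝ E) [FiniteDimensional ℝ U] {m : ℕ}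
    (w : Fin m → E) (hm : m < finrank ℝ U) : ∃ x ∈ U, x ≠ 0 ∧ ∀ k, ⟪w k, x⟫_ℝ = 0 := by
  let φ : U →ₗ[ℝ] Fin m → ℝ := LinearMap.pi fun k => innerₗ E (w k) ∘ₗ U.subtype
  obtain ⟨x, hx, hx0⟩ :=
    φ.ker.ne_bot_iff.mp (LinearMap.ker_ne_bot_of_finrank_lt (by simpa using hm))
  exact ⟨x, x.2, by simpa using hx0, fun k => congrFun (LinearMap.mem_ker.mp hx) k⟩

theorem inner_eq_zero_of_mem_span_of_forall {s : Set E} {u v : E}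
    (h : ∀ x ∈ s, ⟪u, x⟫_ℝ = 0) (hv : v ∈ Submodule.span ℝ s) : ⟪u, v⟫_ℝ = 0 :=
  Submodule.mem_orthogonal_singleton_iff_inner_right.mp <| Submodule.span_le.mpr
    (fun x hx => Submodule.mem_orthogonal_singleton_iff_inner_right.mpr (h x hx)) hv

theorem inner_eq_zero_of_mem_span_castLE {n m : ℕ} {b : Fin n → E} (hb : Orthonormal ℝ b)
    (hm : m ≤ n) {i : Fin n} (hi : m ≤ i) {v : E}
    (hv : v ∈ Submodule.span ℝ (Set.range (b ∘ Fin.castLE hm))) : ⟪b i, v⟫_ℝ = 0 := by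
  refine inner_eq_zero_of_mem_span_of_forall ?_ hv
  rintro _ ⟨j, rfl⟩
  exact hb.2 (Fin.val_ne_iff.mp (j.2.trans_le hi).ne')

theorem finrank_span_castLE {n m : ℕ} {b : Fin n → E} (hb : Orthonormal ℝ b) (hm : m ≤ n) :
    finrank ℝ (Submodule.span ℝ (Set.range (b ∘ Fin.castLE hm))) = m := by
  simpa using finrank_span_eq_card (hb.comp _ (Fin.castLE_injective hm)).linearIndependent

/-- The squared volume of the parallelepiped spanned by `w`. -/
noncomputable def gramDet {q : ℕ} (w : Fin q → E) : ℝ := (Matrix.gram ℝ w).det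

theorem gramDet_nonneg {q : ℕ} (w : Fin q → E) : 0 ≤ gramDet w :=
  (Matrix.posSemidef_gram ℝ w).det_nonneg

theorem gramDet_eq_zero {q : ℕ} {w : Fin q → E} (hw : ¬ LinearIndependent ℝ w) :
    gramDet w = 0 := by
  by_contra h
  exact hw (Matrix.linearIndependent_of_det_gram_ne_zero h)

theorem gramDet_of_orthogonal {q : ℕ} {w : Fin q → E} (hw : ∀ i j, i ≠ j → ⟪w i, w j⟫_ℝ = 0) :
    gramDet w = ∏ i, ‖w i‖ ^ 2 := by
  have : Matrix.gram ℝ w = Matrix.diagonal fun i => ‖w i‖ ^ 2 := by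
    ext i j
    rcases eq_or_ne i j with rfl | h
    · simp
    · simp [h, hw i j h]
  rw [gramDet, this, Matrix.det_diagonal]

theorem gramDet_of_orthonormal {q : ℕ} {w : Fin q → E} (hw : Orthonormal ℝ w) :
    gramDet w = 1 := by
  rw [gramDet_of_orthogonal fun i j h => hw.2 h]
  simp [hw.1]

theorem gramDet_sum_smul {q : ℕ} (C : Matrix (Fin q) (Fin q) ℝ) (v : Fin q → E) :
    gramDet (fun i => ∑ j, C i j • v j) = C.det ^ 2 * gramDet v := by
  have : Matrix.gram ℝ (fun i => ∑ j, C i j • v j) = C * Matrix.gram ℝ v * C.transpose := by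
    ext i j
    simp only [Matrix.gram_apply, Matrix.mul_apply, Matrix.transpose_apply, sum_inner, inner_sum,
      real_inner_smul_left, real_inner_smul_right, Finset.sum_mul]
    refine Finset.sum_congr rfl fun k _ => Finset.sum_congr rfl fun l _ => ?_
    ring
  rw [gramDet, this, Matrix.det_mul, Matrix.det_mul, Matrix.det_transpose, gramDet]
  ring

theorem continuous_gramDet (q : ℕ) : Continuous (gramDet : (Fin q → E) → ℝ) :=
  Continuous.matrix_det <| continuous_matrix fun i j =>
    (continuous_apply i).inner (continuous_apply j)

variable [FiniteDimensional ℝ E] [FiniteDimensional ℝ F] [FiniteDimensional ℝ G]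

/-- A right singular basis of `X`: an orthonormal basis with pairwise orthogonal images, whose
lengths are the singular values in decreasing order. -/
structure IsSingularBasis (X : E →ₗ[ℝ] F) {n : ℕ} (b : OrthonormalBasis (Fin n) ℝ E) : Prop where
  inner_map_eq_zero : ∀ i j, i ≠ j → ⟪X (b i), X (b j)⟫_ℝ = 0
  norm_map : ∀ i, ‖X (b i)‖ = X.singularValues i

theorem exists_isSingularBasis (X : E →ₗ[ℝ] F) {n : ℕ} (hn : finrank ℝ E = n) :
    ∃ b : OrthonormalBasis (Fin n) ℝ E, IsSingularBasis X b := by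
  have hS := X.isSymmetric_adjoint_comp_self
  have hinner : ∀ i j, ⟪X (hS.eigenvectorBasis hn i), X (hS.eigenvectorBasis hn j)⟫_ℝ
      = hS.eigenvalues hn i * ⟪hS.eigenvectorBasis hn i, hS.eigenvectorBasis hn j⟫_ℝ := by
    intro i j
    rw [← LinearMap.adjoint_inner_left, ← LinearMap.comp_apply, hS.apply_eigenvectorBasis hn i]
    exact real_inner_smul_left _ _ _
  refine ⟨hS.eigenvectorBasis hn, fun i j hij => ?_, fun i => ?_⟩
  · rw [hinner, (hS.eigenvectorBasis hn).inner_eq_zero hij, mul_zero]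
  · refine (sq_eq_sq₀ (norm_nonneg _) (X.singularValues_nonneg i)).mp ?_
    rw [X.sq_singularValues_fin hn, ← real_inner_self_eq_norm_sq, hinner,
      (hS.eigenvectorBasis hn).inner_eq_one, mul_one]

namespace IsSingularBasis

variable {X : E →ₗ[ℝ] F} {n : ℕ} {b : OrthonormalBasis (Fin n) ℝ E}

theorem norm_sq_map_eq_sum (hb : IsSingularBasis X b) (v : E) :
    ‖X v‖ ^ 2 = ∑ i, ⟪b i, v⟫_ℝ ^ 2 * X.singularValues i ^ 2 := by
  conv_lhs => rw [← b.sum_repr' v, map_sum]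
  rw [← real_inner_self_eq_norm_sq, sum_inner]
  refine Finset.sum_congr rfl fun i _ => ?_
  rw [inner_sum, Finset.sum_eq_single i _ (by simp), ← hb.norm_map]
  · rw [map_smul, real_inner_smul_left, real_inner_smul_right, real_inner_self_eq_norm_sq]
    ring
  · intro j _ hj
    rw [map_smul, map_smul, real_inner_smul_left, real_inner_smul_right,
      hb.inner_map_eq_zero i j hj.symm, mul_zero, mul_zero]

theorem norm_map_le (hb : IsSingularBasis X b) {m : ℕ} {v : E}
    (hv : ∀ i : Fin n, i < m → ⟪b i, v⟫_ℝ = 0) : ‖X v‖ ≤ X.singularValues m * ‖v‖ := by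
  have hm := X.singularValues_nonneg m
  refine le_of_sq_le_sq ?_ (by positivity)
  rw [mul_pow, hb.norm_sq_map_eq_sum, ← b.sum_sq_inner_right v, Finset.mul_sum]
  refine Finset.sum_le_sum fun i _ => ?_
  rcases lt_or_ge (i : ℕ) m with hi | hi
  · simp [hv i hi]
  · rw [mul_comm]
    gcongr
    exacts [X.singularValues_nonneg i, X.singularValues_antitone hi]

theorem le_norm_map (hb : IsSingularBasis X b) {m : ℕ} {v : E}
    (hv : ∀ i : Fin n, m < i → ⟪b i, v⟫_ℝ = 0) : X.singularValues m * ‖v‖ ≤ ‖X v‖ := by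
  have hm := X.singularValues_nonneg m
  refine le_of_sq_le_sq ?_ (norm_nonneg _)
  rw [mul_pow, hb.norm_sq_map_eq_sum, ← b.sum_sq_inner_right v, Finset.mul_sum]
  refine Finset.sum_le_sum fun i _ => ?_
  rcases lt_or_ge m (i : ℕ) with hi | hi
  · simp [hv i hi]
  · rw [mul_comm]
    gcongr
    exact X.singularValues_antitone hi

end IsSingularBasis

theorem singularValues_zero_eq_norm (X : E →L[ℝ] F) :
    (X : E →ₗ[ℝ] F).singularValues 0 = ‖X‖ := by
  obtain ⟨b, hb⟩ := exists_isSingularBasis (X : E →ₗ[ℝ] F) rfl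
  refine le_antisymm ?_ ?_
  · rcases (finrank ℝ E).eq_zero_or_pos with h | h
    · rw [LinearMap.singularValues_of_finrank_le _ h.le]
      exact norm_nonneg X
    · rw [← hb.norm_map ⟨0, h⟩]
      simpa using X.le_opNorm (b ⟨0, h⟩)
  · exact X.opNorm_le_bound (LinearMap.singularValues_nonneg _ _) fun v =>
      hb.norm_map_le fun i hi => absurd hi (Nat.not_lt_zero i)

theorem singularValues_comp_linearIsometry_le (X : F →ₗ[ℝ] G) (ι : E →ₗᵢ[ℝ] F) (m : ℕ) :
    (X ∘ₗ ι.toLinearMap).singularValues m ≤ X.singularValues m := by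
  rcases le_or_gt (finrank ℝ E) m with hm | hm
  · rw [LinearMap.singularValues_of_finrank_le _ hm]
    exact X.singularValues_nonneg m
  obtain ⟨c, hc⟩ := exists_isSingularBasis (X ∘ₗ ι.toLinearMap) rfl
  obtain ⟨b, hb⟩ := exists_isSingularBasis X rfl
  have hmF : m ≤ finrank ℝ F :=
    hm.le.trans (LinearMap.finrank_le_finrank_of_injective (f := ι.toLinearMap) ι.injective)
  -- `m + 1` dimensions of vectors stretched by at least the left side meet the orthogonal
  -- complement of the first `m` vectors of `b`
  obtain ⟨x, hxU, hx0, hx⟩ := exists_mem_ne_zero_forall_inner_eq_zero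
    ((Submodule.span ℝ (Set.range (c ∘ Fin.castLE hm))).map ι.toLinearMap)
    (b ∘ Fin.castLE hmF) (by
      rw [((Submodule.equivMapOfInjective _ ι.injective _).finrank_eq).symm,
        finrank_span_castLE c.orthonormal hm]
      exact m.lt_succ_self)
  obtain ⟨y, hy, rfl⟩ := hxU
  have hlow := hc.le_norm_map (m := m) (v := y) fun i hi =>
    inner_eq_zero_of_mem_span_castLE c.orthonormal hm hi hy
  have hupp := hb.norm_map_le (m := m) fun i hi => hx ⟨i, hi⟩
  rw [LinearIsometry.coe_toLinearMap, ι.norm_map] at hupp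
  have hy0 : y ≠ 0 := by
    rintro rfl
    exact hx0 (map_zero _)
  exact le_of_mul_le_mul_right (hlow.trans hupp) (norm_pos_iff.mpr hy0)

/-- The largest factor by which `X` expands `q`-dimensional volumes; it vanishes when `q` exceeds
the rank of `X`. -/
noncomputable def volGrowth (q : ℕ) (X : E →ₗ[ℝ] F) : ℝ := ∏ i ∈ Finset.range q, X.singularValues i

theorem volGrowth_nonneg (q : ℕ) (X : E →ₗ[ℝ] F) : 0 ≤ volGrowth q X :=
  Finset.prod_nonneg fun i _ => X.singularValues_nonneg i

theorem volGrowth_succ (q : ℕ) (X : E →ₗ[ℝ] F) :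
    volGrowth (q + 1) X = volGrowth q X * X.singularValues q :=
  Finset.prod_range_succ _ _

theorem volGrowth_pos {q : ℕ} {X : E →ₗ[ℝ] F} (hq : q ≤ finrank ℝ X.range) : 0 < volGrowth q X :=
  Finset.prod_pos fun _ hi => X.singularValues_pos_iff_lt_finrank_range.mpr
    ((Finset.mem_range.mp hi).trans_le hq)

theorem volGrowth_eq_zero_of_finrank_lt {q : ℕ} {X : E →ₗ[ℝ] F} (hq : finrank ℝ E < q) :
    volGrowth q X = 0 :=
  Finset.prod_eq_zero (Finset.mem_range.mpr hq) (X.singularValues_of_finrank_le le_rfl)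

theorem volGrowth_le_norm_pow (q : ℕ) (X : E →L[ℝ] F) : volGrowth q (X : E →ₗ[ℝ] F) ≤ ‖X‖ ^ q := by
  rw [volGrowth, ← singularValues_zero_eq_norm]
  calc ∏ i ∈ Finset.range q, (X : E →ₗ[ℝ] F).singularValues i
      ≤ ∏ _i ∈ Finset.range q, (X : E →ₗ[ℝ] F).singularValues 0 :=
        Finset.prod_le_prod (fun i _ => LinearMap.singularValues_nonneg _ i) fun i _ =>
          LinearMap.singularValues_antitone _ i.zero_le
    _ = (X : E →ₗ[ℝ] F).singularValues 0 ^ q := by simp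

theorem singularValues_pow_le_volGrowth (X : E →ₗ[ℝ] F) (q : ℕ) :
    X.singularValues q ^ q ≤ volGrowth q X := by
  calc X.singularValues q ^ q = ∏ _i ∈ Finset.range q, X.singularValues q := by simp
    _ ≤ volGrowth q X := Finset.prod_le_prod (fun _ _ => X.singularValues_nonneg q) fun i hi =>
      X.singularValues_antitone (Finset.mem_range.mp hi).le

theorem IsSingularBasis.gramDet_map_castLE {X : E →ₗ[ℝ] F} {n q : ℕ}
    {b : OrthonormalBasis (Fin n) ℝ E} (hb : IsSingularBasis X b) (hq : q ≤ n) :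
    gramDet (fun i => X (b (Fin.castLE hq i))) = volGrowth q X ^ 2 := by
  rw [gramDet_of_orthogonal fun i j hij =>
    hb.inner_map_eq_zero _ _ fun h => hij (Fin.castLE_injective hq h), volGrowth,
    ← Fin.prod_univ_eq_prod_range, ← Finset.prod_pow]
  simp only [hb.norm_map, Fin.val_castLE]

theorem gramDet_map_eq {q : ℕ} (hq : finrank ℝ E = q) (X : E →ₗ[ℝ] F) (w : Fin q → E) :
    gramDet (fun i => X (w i)) = volGrowth q X ^ 2 * gramDet w := by
  obtain ⟨b, hb⟩ := exists_isSingularBasis X hq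
  have hw : w = fun i => ∑ j, ⟪b j, w i⟫_ℝ • b j := funext fun i => (b.sum_repr' (w i)).symm
  have hXw : (fun i => X (w i)) = fun i => ∑ j, ⟪b j, w i⟫_ℝ • X (b j) := funext fun i => by
    conv_lhs => rw [← b.sum_repr' (w i), map_sum]
    simp only [map_smul]
  have hXb : gramDet (fun j => X (b j)) = volGrowth q X ^ 2 := hb.gramDet_map_castLE le_rfl
  conv_rhs => rw [hw]
  rw [hXw, gramDet_sum_smul (fun i j => ⟪b j, w i⟫_ℝ), gramDet_sum_smul (fun i j => ⟪b j, w i⟫_ℝ),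
    gramDet_of_orthonormal b.orthonormal, hXb]
  ring

theorem gramDet_map_le {q : ℕ} (X : E →ₗ[ℝ] F) (w : Fin q → E) :
    gramDet (fun i => X (w i)) ≤ volGrowth q X ^ 2 * gramDet w := by
  by_cases hw : LinearIndependent ℝ w
  · set K := Submodule.span ℝ (Set.range w)
    set w' : Fin q → K := fun i => ⟨w i, Submodule.subset_span ⟨i, rfl⟩⟩
    calc gramDet (fun i => X (w i)) = volGrowth q (X ∘ₗ K.subtypeₗᵢ.toLinearMap) ^ 2 * gramDet w :=
          gramDet_map_eq (by simpa using finrank_span_eq_card hw) (X ∘ₗ K.subtypeₗᵢ.toLinearMap) w'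
      _ ≤ volGrowth q X ^ 2 * gramDet w := by
          gcongr
          · exact gramDet_nonneg w
          · exact volGrowth_nonneg _ _
          · exact Finset.prod_le_prod (fun i _ => LinearMap.singularValues_nonneg _ i)
              fun i _ => singularValues_comp_linearIsometry_le X _ i
  · rw [gramDet_eq_zero hw, gramDet_eq_zero (w := fun i => X (w i))
      fun h => hw (LinearIndependent.of_comp X h), mul_zero]

theorem volGrowth_le_iff {q : ℕ} {X : E →ₗ[ℝ] F} {K : ℝ} (hK : 0 ≤ K) :
    volGrowth q X ≤ K ↔ ∀ w : Fin q → E, gramDet (fun i => X (w i)) ≤ K ^ 2 * gramDet w := by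
  refine ⟨fun h w => (gramDet_map_le X w).trans ?_, fun h => ?_⟩
  · have := volGrowth_nonneg q X
    have := gramDet_nonneg w
    gcongr
  · rcases lt_or_ge (finrank ℝ E) q with hq | hq
    · rwa [volGrowth_eq_zero_of_finrank_lt hq]
    · obtain ⟨b, hb⟩ := exists_isSingularBasis X rfl
      have hbq := h fun i => b (Fin.castLE hq i)
      rw [hb.gramDet_map_castLE hq, gramDet_of_orthonormal (w := fun i => b (Fin.castLE hq i))
        (b.orthonormal.comp _ (Fin.castLE_injective hq)), mul_one] at hbq
      exact le_of_sq_le_sq hbq hK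

theorem volGrowth_comp_le (q : ℕ) (X : F →ₗ[ℝ] G) (Y : E →ₗ[ℝ] F) :
    volGrowth q (X ∘ₗ Y) ≤ volGrowth q X * volGrowth q Y := by
  refine (volGrowth_le_iff (mul_nonneg (volGrowth_nonneg _ _) (volGrowth_nonneg _ _))).mpr
    fun w => ?_
  calc gramDet (fun i => X (Y (w i))) ≤ volGrowth q X ^ 2 * gramDet (fun i => Y (w i)) :=
        gramDet_map_le X _
    _ ≤ volGrowth q X ^ 2 * (volGrowth q Y ^ 2 * gramDet w) := by
        gcongr
        exact gramDet_map_le Y w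
    _ = (volGrowth q X * volGrowth q Y) ^ 2 * gramDet w := by ring

theorem measurable_volGrowth (q : ℕ) :
    Measurable fun X : E →L[ℝ] F => volGrowth q (X : E →ₗ[ℝ] F) := by
  refine measurable_of_Iic fun K => ?_
  rcases lt_or_ge K 0 with hK | hK
  · convert MeasurableSet.empty
    exact Set.eq_empty_of_forall_notMem fun X hX => (hK.trans_le (volGrowth_nonneg q _)).not_ge hX
  · have : (fun X : E →L[ℝ] F => volGrowth q (X : E →ₗ[ℝ] F)) ⁻¹' Set.Iic K =
        ⋂ w : Fin q → E, {X : E →L[ℝ] F | gramDet (fun i => X (w i)) ≤ K ^ 2 * gramDet w} := by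
      ext X
      simp [volGrowth_le_iff hK]
    rw [this]
    refine (isClosed_iInter fun w => isClosed_le ?_ continuous_const).measurableSet
    exact (continuous_gramDet q).comp (by fun_prop)

/-- `X` stretches vectors of `U` by at most `t`, and every vector by at least `s` times its distance
to `U`. For `t < s` this makes `U` an approximation of the directions `X` expands least. -/
structure IsSlowSubspace (X : E →L[ℝ] F) (U : Submodule ℝ E) (t s : ℝ) : Prop where
  norm_map_le : ∀ u ∈ U, ‖X u‖ ≤ t * ‖u‖
  le_norm_map : ∀ v, s * ‖v - U.starProjection v‖ ≤ ‖X v‖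

theorem exists_isSlowSubspace (X : E →L[ℝ] F) {m : ℕ} (hm : m + 1 ≤ finrank ℝ E) :
    ∃ U : Submodule ℝ E, finrank ℝ U + (m + 1) = finrank ℝ E ∧ IsSlowSubspace X U
      ((X : E →ₗ[ℝ] F).singularValues (m + 1)) ((X : E →ₗ[ℝ] F).singularValues m) := by
  obtain ⟨b, hb⟩ := exists_isSingularBasis (X : E →ₗ[ℝ] F) rfl
  set K := Submodule.span ℝ (Set.range (b ∘ Fin.castLE hm))
  have hbK : ∀ i : Fin (finrank ℝ E), (i : ℕ) < m + 1 → b i ∈ K := fun i hi =>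
    Submodule.subset_span ⟨⟨i, hi⟩, rfl⟩
  refine ⟨Kᗮ, ?_, fun u hu => ?_, fun v => ?_⟩
  · rw [← K.finrank_add_finrank_orthogonal, finrank_span_castLE b.orthonormal hm, add_comm]
  · exact hb.norm_map_le fun i hi => (K.mem_orthogonal u).mp hu _ (hbK i hi)
  · have hsing := LinearMap.singularValues_nonneg (X : E →ₗ[ℝ] F)
    refine le_of_sq_le_sq ?_ (norm_nonneg _)
    rw [mul_pow, ← b.sum_sq_inner_right (v - Kᗮ.starProjection v), Finset.mul_sum]
    refine (Finset.sum_le_sum fun i _ => ?_).trans (hb.norm_sq_map_eq_sum v).ge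
    rcases lt_or_ge (i : ℕ) (m + 1) with hi | hi
    · rw [inner_sub_right, (K.mem_orthogonal _).mp (Kᗮ.starProjection_apply_mem v) _ (hbK i hi),
        sub_zero, mul_comm]
      gcongr
      exacts [hsing m, LinearMap.singularValues_antitone _ (Nat.lt_succ_iff.mp hi)]
    · have hvK : v - Kᗮ.starProjection v ∈ K := by
        simpa only [K.orthogonal_orthogonal] using Kᗮ.sub_starProjection_mem_orthogonal v
      rw [inner_eq_zero_of_mem_span_castLE b.orthonormal hm hi hvK]
      simp only [ne_eq, OfNat.ofNat_ne_zero, not_false_eq_true, zero_pow, mul_zero]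
      positivity

end SingularValues

section Projections

open Module

open scoped InnerProductSpace

variable {E F G : Type*} [NormedAddCommGroup E] [InnerProductSpace ℝ E] [FiniteDimensional ℝ E]
  [NormedAddCommGroup F] [InnerProductSpace ℝ F] [NormedAddCommGroup G] [InnerProductSpace ℝ G]

theorem norm_sub_starProjection_le {U : Submodule ℝ E} (v : E) {u : E} (hu : u ∈ U) :
    ‖v - U.starProjection v‖ ≤ ‖v - u‖ := by
  rw [U.starProjection_minimal]
  exact ciInf_le ⟨0, by rintro _ ⟨x, rfl⟩; positivity⟩ (⟨u, hu⟩ : U)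

theorem injective_orthogonalProjectionOnto_comp_subtype {U V : Submodule ℝ E} {δ : ℝ} (hδ : δ < 1)
    (h : ∀ u ∈ U, ‖u - V.starProjection u‖ ≤ δ * ‖u‖) :
    Function.Injective (V.orthogonalProjectionOnto.toLinearMap ∘ₗ U.subtype) := by
  rw [← LinearMap.ker_eq_bot, LinearMap.ker_eq_bot']
  intro u hu
  have hVu : V.starProjection (u : E) = 0 := by
    rw [Submodule.starProjection_apply]
    simpa using congrArg Subtype.val hu
  have hle := h u u.2
  rw [hVu, sub_zero] at hle
  by_contra hne
  have : 0 < ‖(u : E)‖ := by simpa using hne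
  nlinarith

theorem finrank_le_of_norm_starProjection_sub_lt_one {U V : Submodule ℝ E}
    (h : ‖U.starProjection - V.starProjection‖ < 1) : finrank ℝ U ≤ finrank ℝ V :=
  LinearMap.finrank_le_finrank_of_injective <|
    injective_orthogonalProjectionOnto_comp_subtype h fun u hu => by
      simpa [U.starProjection_eq_self_iff.mpr hu] using
        (U.starProjection - V.starProjection).le_opNorm u

theorem norm_sub_starProjection_le_of_finrank_eq {U V : Submodule ℝ E}
    (hUV : finrank ℝ U = finrank ℝ V) {δ : ℝ} (hδ0 : 0 ≤ δ) (hδ : δ ≤ 1 / 2)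
    (h : ∀ u ∈ U, ‖u - V.starProjection u‖ ≤ δ * ‖u‖) {w : E} (hw : w ∈ V) :
    ‖w - U.starProjection w‖ ≤ 2 * δ * ‖w‖ := by
  have hinj := injective_orthogonalProjectionOnto_comp_subtype (by linarith) h
  obtain ⟨u, hu⟩ := (LinearMap.injective_iff_surjective_of_finrank_eq_finrank hUV).mp hinj ⟨w, hw⟩
  have huw : V.starProjection (u : E) = w := by
    rw [Submodule.starProjection_apply]
    simpa using congrArg Subtype.val hu
  have hdist : ‖(u : E) - w‖ ≤ δ * ‖(u : E)‖ := huw ▸ h u u.2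
  have htri : ‖(u : E)‖ ≤ ‖w‖ + ‖(u : E) - w‖ := by simpa using norm_add_le w ((u : E) - w)
  have hnorm : ‖(u : E)‖ ≤ 2 * ‖w‖ := by nlinarith [norm_nonneg (u : E)]
  calc ‖w - U.starProjection w‖ ≤ ‖w - u‖ := norm_sub_starProjection_le w u.2
    _ = ‖(u : E) - w‖ := norm_sub_rev _ _
    _ ≤ 2 * δ * ‖w‖ := by nlinarith

theorem norm_starProjection_le_of_mem_orthogonal {U V : Submodule ℝ E} {δ : ℝ} (hδ0 : 0 ≤ δ)
    (h : ∀ u ∈ U, ‖u - V.starProjection u‖ ≤ δ * ‖u‖) {x : E} (hx : x ∈ Vᗮ) :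
    ‖U.starProjection x‖ ≤ δ * ‖x‖ := by
  set y := U.starProjection x
  have hy : y ∈ U := U.starProjection_apply_mem x
  have hsq : ‖y‖ ^ 2 = ⟪x, y - V.starProjection y⟫_ℝ := by
    rw [inner_sub_right, (V.mem_orthogonal' x).mp hx _ (V.starProjection_apply_mem y), sub_zero,
      ← real_inner_self_eq_norm_sq, U.inner_starProjection_left_eq_right,
      U.starProjection_eq_self_iff.mpr hy]
  have hle : ‖y‖ ^ 2 ≤ ‖x‖ * (δ * ‖y‖) :=
    hsq ▸ (real_inner_le_norm _ _).trans (by gcongr; exact h y hy)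
  by_contra! hlt
  have : 0 ≤ δ * ‖x‖ := by positivity
  nlinarith

theorem norm_starProjection_sub_starProjection_le {U V : Submodule ℝ E}
    (hUV : finrank ℝ U = finrank ℝ V) {δ : ℝ} (hδ0 : 0 ≤ δ) (hδ : δ ≤ 1 / 2)
    (h : ∀ u ∈ U, ‖u - V.starProjection u‖ ≤ δ * ‖u‖) :
    ‖U.starProjection - V.starProjection‖ ≤ 3 * δ := by
  refine ContinuousLinearMap.opNorm_le_bound _ (by positivity) fun v => ?_
  set w := V.starProjection v with hw
  have horth : ‖U.starProjection (v - w)‖ ≤ δ * ‖v‖ :=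
    (norm_starProjection_le_of_mem_orthogonal hδ0 h (V.sub_starProjection_mem_orthogonal v)).trans
      (by gcongr; simpa using norm_sub_starProjection_le v V.zero_mem)
  have hpar : ‖w - U.starProjection w‖ ≤ 2 * δ * ‖v‖ :=
    (norm_sub_starProjection_le_of_finrank_eq hUV hδ0 hδ h (V.starProjection_apply_mem v)).trans
      (by gcongr; exact V.norm_starProjection_apply_le v)
  calc ‖(U.starProjection - V.starProjection) v‖
      = ‖U.starProjection (v - w) - (w - U.starProjection w)‖ := by
        rw [map_sub, sub_apply, ← hw]
        congr 1
        abel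
    _ ≤ δ * ‖v‖ + 2 * δ * ‖v‖ := (norm_sub_le _ _).trans (add_le_add horth hpar)
    _ = 3 * δ * ‖v‖ := by ring

theorem exists_eq_starProjection_of_tendsto {P : E →L[ℝ] E} {U : ℕ → Submodule ℝ E} {r : ℕ}
    (hr : ∀ n, finrank ℝ (U n) = r)
    (hP : Tendsto (fun n => (U n).starProjection) atTop (𝓝 P)) :
    ∃ V : Submodule ℝ E, finrank ℝ V = r ∧ P = V.starProjection := by
  have hstar : IsStarProjection P :=
    ⟨tendsto_nhds_unique ((hP.mul hP).congr fun _ =>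
      isStarProjection_starProjection.isIdempotentElem) hP,
    tendsto_nhds_unique (hP.star.congr fun _ => isStarProjection_starProjection.isSelfAdjoint) hP⟩
  obtain ⟨_, hV⟩ := isStarProjection_iff_eq_starProjection_range.mp hstar
  obtain ⟨n, hn⟩ := ((Metric.tendsto_nhds.mp hP) 1 one_pos).exists
  refine ⟨_, ?_, hV⟩
  rw [← hr n]
  refine le_antisymm (finrank_le_of_norm_starProjection_sub_lt_one ?_)
    (finrank_le_of_norm_starProjection_sub_lt_one ?_)
  · rwa [dist_comm, dist_eq_norm, hV] at hn
  · rwa [dist_eq_norm, hV] at hn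

theorem IsSlowSubspace.norm_comp_starProjection_le {X : E →L[ℝ] F} {U : Submodule ℝ E} {t s : ℝ}
    (hU : IsSlowSubspace X U t s) (ht : 0 ≤ t) (V : Submodule ℝ E) :
    ‖X ∘L V.starProjection‖ ≤ t + ‖X‖ * ‖U.starProjection - V.starProjection‖ := by
  refine ContinuousLinearMap.opNorm_le_bound _ (by positivity) fun v => ?_
  calc ‖X (V.starProjection v)‖
      = ‖X (U.starProjection v) - X ((U.starProjection - V.starProjection) v)‖ := by simp
    _ ≤ t * ‖v‖ + ‖X‖ * (‖U.starProjection - V.starProjection‖ * ‖v‖) := by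
        refine (norm_sub_le _ _).trans
          (add_le_add ?_ (X.le_opNorm_of_le (ContinuousLinearMap.le_opNorm _ v)))
        exact (hU.norm_map_le _ (U.starProjection_apply_mem v)).trans
          (by gcongr; exact U.norm_starProjection_apply_le v)
    _ = (t + ‖X‖ * ‖U.starProjection - V.starProjection‖) * ‖v‖ := by ring

theorem IsSlowSubspace.norm_starProjection_sub_le {X : E →L[ℝ] F} {a : F →L[ℝ] G}
    {U V : Submodule ℝ E} {t s t' s' δ : ℝ} (hU : IsSlowSubspace X U t s)
    (hV : IsSlowSubspace (a ∘L X) V t' s') (hUV : finrank ℝ U = finrank ℝ V) (hs' : 0 < s')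
    (hδ0 : 0 ≤ δ) (hδ : δ ≤ 1 / 2) (h : ‖a‖ * t ≤ δ * s') :
    ‖U.starProjection - V.starProjection‖ ≤ 3 * δ := by
  refine norm_starProjection_sub_starProjection_le hUV hδ0 hδ fun u hu => ?_
  refine le_of_mul_le_mul_left ?_ hs'
  calc s' * ‖u - V.starProjection u‖ ≤ ‖a (X u)‖ := hV.le_norm_map u
    _ ≤ ‖a‖ * (t * ‖u‖) := a.le_opNorm_of_le (hU.norm_map_le u hu)
    _ = ‖a‖ * t * ‖u‖ := by ring
    _ ≤ δ * s' * ‖u‖ := by gcongr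
    _ = s' * (δ * ‖u‖) := by ring

variable [FiniteDimensional ℝ F]

/-- The operator `(1 + X† X)⁻¹`. It depends continuously on `X` and nearly equals the projection
onto a subspace that `X` contracts when `X` expands its complement, so limits of such projections
are measurable. -/
noncomputable def gramResolvent (X : E →L[ℝ] F) : E →L[ℝ] E :=
  Ring.inverse (1 + X.adjoint ∘L X)

theorem isUnit_one_add_adjoint_comp_self (X : E →L[ℝ] F) : IsUnit (1 + X.adjoint ∘L X) := by
  have hinj : Function.Injective (1 + X.adjoint ∘L X : E →L[ℝ] E).toLinearMap := by
    rw [← LinearMap.ker_eq_bot, LinearMap.ker_eq_bot']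
    intro v hv
    have hinner : ⟪v, v + X.adjoint (X v)⟫_ℝ = ⟪v, (0 : E)⟫_ℝ := congrArg (⟪v, ·⟫_ℝ) hv
    rw [inner_add_right, inner_zero_right, ContinuousLinearMap.adjoint_inner_right,
      real_inner_self_eq_norm_sq, real_inner_self_eq_norm_sq] at hinner
    have : ‖v‖ ^ 2 = 0 := by nlinarith [sq_nonneg ‖v‖, sq_nonneg ‖X v‖]
    simpa using this
  exact ContinuousLinearMap.isUnit_iff_bijective.mpr
    ⟨hinj, LinearMap.injective_iff_surjective.mp hinj⟩

theorem continuous_gramResolvent : Continuous (gramResolvent : (E →L[ℝ] F) → E →L[ℝ] E) := by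
  rw [continuous_iff_continuousAt]
  intro X
  obtain ⟨u, hu⟩ := isUnit_one_add_adjoint_comp_self X
  have hinv := NormedRing.inverse_continuousAt u
  rw [hu] at hinv
  have hcont : Continuous fun X : E →L[ℝ] F => 1 + X.adjoint ∘L X :=
    continuous_const.add ((LinearIsometryEquiv.continuous _).clm_comp continuous_id)
  exact ContinuousAt.comp (f := fun X : E →L[ℝ] F => 1 + X.adjoint ∘L X) hinv hcont.continuousAt

theorem gramResolvent_apply_add (X : E →L[ℝ] F) (v : E) :
    gramResolvent X v + X.adjoint (X (gramResolvent X v)) = v :=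
  congrArg (fun Y : E →L[ℝ] E => Y v)
    (Ring.mul_inverse_cancel _ (isUnit_one_add_adjoint_comp_self X))

theorem norm_sq_gramResolvent_apply_add (X : E →L[ℝ] F) (v : E) :
    ‖gramResolvent X v‖ ^ 2 + ‖X (gramResolvent X v)‖ ^ 2 = ⟪gramResolvent X v, v⟫_ℝ := by
  conv_rhs => rw [← gramResolvent_apply_add X v]
  rw [inner_add_right, gramResolvent_apply_add, ContinuousLinearMap.adjoint_inner_right,
    real_inner_self_eq_norm_sq, real_inner_self_eq_norm_sq]

theorem norm_gramResolvent_apply_le (X : E →L[ℝ] F) (v : E) : ‖gramResolvent X v‖ ≤ ‖v‖ := by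
  have hsq := norm_sq_gramResolvent_apply_add X v
  have hinner := real_inner_le_norm (gramResolvent X v) v
  by_contra! h
  nlinarith [norm_nonneg v, sq_nonneg ‖X (gramResolvent X v)‖]

theorem norm_map_gramResolvent_apply_le (X : E →L[ℝ] F) (v : E) :
    ‖X (gramResolvent X v)‖ ≤ ‖v‖ := by
  refine le_of_sq_le_sq ?_ (norm_nonneg v)
  nlinarith [norm_nonneg v, sq_nonneg ‖gramResolvent X v‖, norm_sq_gramResolvent_apply_add X v,
    real_inner_le_norm (gramResolvent X v) v, norm_gramResolvent_apply_le X v]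

theorem norm_gramResolvent_sub_starProjection_le {s : ℝ} (hs : 0 < s) {X : E →L[ℝ] F}
    {U : Submodule ℝ E} (hX : ∀ v, s * ‖v - U.starProjection v‖ ≤ ‖X v‖) (V : Submodule ℝ E) :
    ‖gramResolvent X - V.starProjection‖
      ≤ s⁻¹ + ‖U.starProjection - V.starProjection‖ + ‖X ∘L V.starProjection‖ := by
  refine ContinuousLinearMap.opNorm_le_bound _ (by positivity) fun v => ?_
  set y := gramResolvent X v with hy
  have hyv : ‖y‖ ≤ ‖v‖ := norm_gramResolvent_apply_le X v
  have hXy : ‖X y‖ ≤ ‖v‖ := norm_map_gramResolvent_apply_le X v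
  have hVv : V.starProjection v = V.starProjection y + (X ∘L V.starProjection).adjoint (X y) := by
    conv_lhs => rw [← gramResolvent_apply_add X v, map_add]
    rw [ContinuousLinearMap.adjoint_comp, V.starProjection_isSymmetric.isSelfAdjoint.adjoint_eq]
    rfl
  have hslow : ‖y - U.starProjection y‖ ≤ s⁻¹ * ‖v‖ := by
    rw [inv_mul_eq_div, le_div_iff₀ hs, mul_comm]
    exact (hX y).trans hXy
  have hclose := (U.starProjection - V.starProjection).le_opNorm_of_le hyv
  have hadj := (X ∘L V.starProjection).adjoint.le_opNorm_of_le hXy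
  rw [LinearIsometryEquiv.norm_map] at hadj
  calc ‖(gramResolvent X - V.starProjection) v‖
      = ‖(y - U.starProjection y) + (U.starProjection - V.starProjection) y
          - (X ∘L V.starProjection).adjoint (X y)‖ := by
        rw [sub_apply, sub_apply, hVv, ← hy]
        congr 1
        abel
    _ ≤ s⁻¹ * ‖v‖ + ‖U.starProjection - V.starProjection‖ * ‖v‖
          + ‖X ∘L V.starProjection‖ * ‖v‖ :=
        (norm_sub_le _ _).trans <|
          add_le_add ((norm_add_le _ _).trans (add_le_add hslow hclose)) hadj
    _ = _ := by ring

end Projections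

section ExponentialRates

/-- The exponential growth rate of `x` is at most `c`, that is `limsup (log (x n) / n) ≤ c`,
phrased without logarithms so that zero and negative values of `x` are allowed. -/
def HasExpRateLE (x : ℕ → ℝ) (c : ℝ) : Prop :=
  ∀ b > c, ∀ᶠ n : ℕ in atTop, x n ≤ Real.exp (b * n)

/-- The exponential growth rate of `x` is at least `c`, that is `x` is eventually positive and
`c ≤ liminf (log (x n) / n)`. -/
def HasExpRateGE (x : ℕ → ℝ) (c : ℝ) : Prop :=
  ∀ b < c, ∀ᶠ n : ℕ in atTop, Real.exp (b * n) ≤ x n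

variable {x y : ℕ → ℝ} {c c' : ℝ}

theorem eventually_mul_exp_le (C : ℝ) {α β : ℝ} (h : α < β) :
    ∀ᶠ n : ℕ in atTop, C * Real.exp (α * n) ≤ Real.exp (β * n) := by
  have hlim : Tendsto (fun n : ℕ => Real.exp ((β - α) * n)) atTop atTop :=
    Real.tendsto_exp_atTop.comp (tendsto_natCast_atTop_atTop.const_mul_atTop (sub_pos.mpr h))
  filter_upwards [hlim.eventually_ge_atTop C] with n hn
  calc C * Real.exp (α * n) ≤ Real.exp ((β - α) * n) * Real.exp (α * n) := by gcongr
    _ = Real.exp (β * n) := by rw [← Real.exp_add]; ring_nf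

namespace HasExpRateLE

theorem mono (hx : HasExpRateLE x c) (h : c ≤ c') : HasExpRateLE x c' :=
  fun b hb => hx b (h.trans_lt hb)

theorem of_eventually_le (hy : HasExpRateLE y c) (h : ∀ᶠ n in atTop, x n ≤ y n) :
    HasExpRateLE x c := fun b hb => by
  filter_upwards [h, hy b hb] with n h₁ h₂ using h₁.trans h₂

theorem exp (c : ℝ) : HasExpRateLE (fun n : ℕ => Real.exp (c * n)) c := fun _ hb =>
  Eventually.of_forall fun n =>
    Real.exp_le_exp.mpr (mul_le_mul_of_nonneg_right hb.le n.cast_nonneg)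

theorem const_mul (hx : HasExpRateLE x c) {C : ℝ} (hC : 0 ≤ C) :
    HasExpRateLE (fun n => C * x n) c := fun b hb => by
  obtain ⟨b', hcb', hb'b⟩ := exists_between hb
  filter_upwards [hx b' hcb', eventually_mul_exp_le C hb'b] with n h₁ h₂
  exact (mul_le_mul_of_nonneg_left h₁ hC).trans h₂

theorem add (hx : HasExpRateLE x c) (hy : HasExpRateLE y c) :
    HasExpRateLE (fun n => x n + y n) c := fun b hb => by
  obtain ⟨b', hcb', hb'b⟩ := exists_between hb
  filter_upwards [hx b' hcb', hy b' hcb', eventually_mul_exp_le 2 hb'b] with n h₁ h₂ h₃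
  linarith

theorem mul (hx : HasExpRateLE x c) (hy : HasExpRateLE y c') (hy0 : ∀ n, 0 ≤ y n) :
    HasExpRateLE (fun n => x n * y n) (c + c') := fun b hb => by
  filter_upwards [hx (c + (b - c - c') / 2) (by linarith),
    hy (c' + (b - c - c') / 2) (by linarith)] with n h₁ h₂
  calc x n * y n ≤ Real.exp ((c + (b - c - c') / 2) * n) * Real.exp ((c' + (b - c - c') / 2) * n) :=
        mul_le_mul h₁ h₂ (hy0 n) (Real.exp_pos _).le
    _ = Real.exp (b * n) := by rw [← Real.exp_add]; ring_nf

theorem of_pow {k : ℕ} (hk : k ≠ 0) (hx0 : ∀ n, 0 ≤ x n)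
    (h : HasExpRateLE (fun n => x n ^ k) (k * c)) : HasExpRateLE x c := fun b hb => by
  filter_upwards [h (k * b) (by gcongr)] with n hn
  rwa [mul_assoc, Real.exp_nat_mul, pow_le_pow_iff_left₀ (hx0 n) (Real.exp_pos _).le hk] at hn

theorem comp_add_one (hx : HasExpRateLE x c) : HasExpRateLE (fun n => x (n + 1)) c := fun b hb => by
  obtain ⟨b', hcb', hb'b⟩ := exists_between hb
  filter_upwards [(tendsto_add_atTop_nat 1).eventually (hx b' hcb'),
    eventually_mul_exp_le (Real.exp b') hb'b] with n h₁ h₂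
  calc x (n + 1) ≤ Real.exp (b' * (n + 1 : ℕ)) := h₁
    _ = Real.exp b' * Real.exp (b' * n) := by rw [← Real.exp_add]; push_cast; ring_nf
    _ ≤ Real.exp (b * n) := h₂

theorem tendsto_log_div_bot (hx0 : ∀ n, 0 < x n) (h : ∀ c, HasExpRateLE x c) :
    Tendsto (fun n : ℕ => ((Real.log (x n) / n : ℝ) : EReal)) atTop (𝓝 ⊥) := by
  refine EReal.tendsto_nhds_bot_iff_real.mpr fun b => ?_
  obtain ⟨b', hb'⟩ := exists_lt b
  filter_upwards [h (b' - 1) b' (by linarith), eventually_gt_atTop 0] with n hn hn0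
  rw [← Real.log_le_iff_le_exp (hx0 n), ← div_le_iff₀ (by exact_mod_cast hn0)] at hn
  exact EReal.coe_lt_coe_iff.mpr (hn.trans_lt hb')

theorem tendsto_zero (hx : HasExpRateLE x c) (hc : c < 0) (hx0 : ∀ n, 0 ≤ x n) :
    Tendsto x atTop (𝓝 0) := by
  obtain ⟨b, hcb, hb⟩ := exists_between hc
  have hexp : Tendsto (fun n : ℕ => Real.exp (b * n)) atTop (𝓝 0) :=
    Real.tendsto_exp_atBot.comp (tendsto_natCast_atTop_atTop.const_mul_atTop_of_neg hb)
  exact squeeze_zero' (Eventually.of_forall hx0) (hx b hcb) hexp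

theorem of_tendsto_log_div {L : EReal} (hx0 : ∀ n, 0 ≤ x n)
    (h : Tendsto (fun n : ℕ => ((Real.log (x n) / n : ℝ) : EReal)) atTop (𝓝 L)) (hL : L ≤ c) :
    HasExpRateLE x c := fun b hb => by
  filter_upwards [h.eventually (gt_mem_nhds (hL.trans_lt (EReal.coe_lt_coe_iff.mpr hb))),
    eventually_gt_atTop 0] with n hn hn0
  rcases (hx0 n).eq_or_lt with h0 | h0
  · exact h0 ▸ (Real.exp_pos _).le
  · rw [← Real.log_le_iff_le_exp h0, ← div_le_iff₀ (by exact_mod_cast hn0)]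
    exact (EReal.coe_lt_coe_iff.mp hn).le

end HasExpRateLE

namespace HasExpRateGE

theorem of_eventually_le (hx : HasExpRateGE x c) (h : ∀ᶠ n in atTop, x n ≤ y n) :
    HasExpRateGE y c := fun b hb => by
  filter_upwards [h, hx b hb] with n h₁ h₂ using h₂.trans h₁

theorem exp (c : ℝ) : HasExpRateGE (fun n : ℕ => Real.exp (c * n)) c := fun _ hb =>
  Eventually.of_forall fun n =>
    Real.exp_le_exp.mpr (mul_le_mul_of_nonneg_right hb.le n.cast_nonneg)

theorem eventually_pos (hx : HasExpRateGE x c) : ∀ᶠ n in atTop, 0 < x n := by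
  filter_upwards [hx (c - 1) (by linarith)] with n hn using (Real.exp_pos _).trans_le hn

theorem const_mul (hx : HasExpRateGE x c) {C : ℝ} (hC : 0 < C) :
    HasExpRateGE (fun n => C * x n) c := fun b hb => by
  obtain ⟨b', hbb', hb'c⟩ := exists_between hb
  filter_upwards [hx b' hb'c, eventually_mul_exp_le C⁻¹ hbb'] with n h₁ h₂
  rw [inv_mul_le_iff₀ hC] at h₂
  exact h₂.trans (by gcongr)

theorem mul (hx : HasExpRateGE x c) (hy : HasExpRateGE y c') :
    HasExpRateGE (fun n => x n * y n) (c + c') := fun b hb => by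
  filter_upwards [hx (c - (c + c' - b) / 2) (by linarith),
    hy (c' - (c + c' - b) / 2) (by linarith)] with n h₁ h₂
  calc Real.exp (b * n)
      = Real.exp ((c - (c + c' - b) / 2) * n) * Real.exp ((c' - (c + c' - b) / 2) * n) := by
        rw [← Real.exp_add]; ring_nf
    _ ≤ x n * y n := mul_le_mul h₁ h₂ (Real.exp_pos _).le ((Real.exp_pos _).le.trans h₁)

theorem inv (hx : HasExpRateGE x c) : HasExpRateLE (fun n => (x n)⁻¹) (-c) := fun b hb => by
  filter_upwards [hx (-b) (by linarith)] with n hn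
  rw [inv_le_comm₀ ((Real.exp_pos _).trans_le hn) (Real.exp_pos _), ← Real.exp_neg]
  simpa only [neg_mul] using hn

theorem comp_add_one (hx : HasExpRateGE x c) : HasExpRateGE (fun n => x (n + 1)) c := fun b hb => by
  obtain ⟨b', hbb', hb'c⟩ := exists_between hb
  filter_upwards [(tendsto_add_atTop_nat 1).eventually (hx b' hb'c),
    eventually_mul_exp_le (Real.exp (-b')) hbb'] with n h₁ h₂
  calc Real.exp (b * n) = Real.exp b' * (Real.exp (-b') * Real.exp (b * n)) := by
        rw [← mul_assoc, ← Real.exp_add, add_neg_cancel, Real.exp_zero, one_mul]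
    _ ≤ Real.exp b' * Real.exp (b' * n) := by gcongr
    _ = Real.exp (b' * (n + 1 : ℕ)) := by rw [← Real.exp_add]; push_cast; ring_nf
    _ ≤ x (n + 1) := h₁

theorem le_of_hasExpRateLE (hx : HasExpRateGE x c) (hx' : HasExpRateLE x c') : c ≤ c' := by
  by_contra! h
  obtain ⟨b, hb, hbc⟩ := exists_between h
  obtain ⟨b', hb', hb'b⟩ := exists_between hb
  obtain ⟨n, h₁, h₂, hn⟩ := ((hx b hbc).and ((hx' b' hb').and (eventually_gt_atTop 0))).exists
  have := Real.exp_le_exp.mp (h₁.trans h₂)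
  exact this.not_gt (mul_lt_mul_of_pos_right hb'b (by exact_mod_cast hn))

theorem of_tendsto_log_div {L : EReal} (hx0 : ∀ n, 0 < x n)
    (h : Tendsto (fun n : ℕ => ((Real.log (x n) / n : ℝ) : EReal)) atTop (𝓝 L)) (hL : c ≤ L) :
    HasExpRateGE x c := fun b hb => by
  filter_upwards [h.eventually (lt_mem_nhds ((EReal.coe_lt_coe_iff.mpr hb).trans_le hL)),
    eventually_gt_atTop 0] with n hn hn0
  rw [← Real.le_log_iff_exp_le (hx0 n), ← le_div_iff₀ (by exact_mod_cast hn0)]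
  exact (EReal.coe_lt_coe_iff.mp hn).le

theorem tendsto_log_div (hlow : HasExpRateGE x c) (hup : HasExpRateLE x c) :
    Tendsto (fun n : ℕ => Real.log (x n) / n) atTop (𝓝 c) := by
  refine tendsto_order.mpr ⟨fun b hb => ?_, fun b hb => ?_⟩
  · obtain ⟨b', hbb', hb'c⟩ := exists_between hb
    filter_upwards [hlow b' hb'c, hlow.eventually_pos, eventually_gt_atTop 0] with n h₁ hpos hn
    exact hbb'.trans_le
      ((le_div_iff₀ (by exact_mod_cast hn)).mpr ((Real.le_log_iff_exp_le hpos).mpr h₁))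
  · obtain ⟨b', hcb', hb'b⟩ := exists_between hb
    filter_upwards [hup b' hcb', hlow.eventually_pos, eventually_gt_atTop 0] with n h₁ hpos hn
    exact ((div_le_iff₀ (by exact_mod_cast hn)).mpr
      ((Real.log_le_iff_le_exp hpos).mpr h₁)).trans_lt hb'b

end HasExpRateGE

theorem dist_le_geometric_of_eventually {X : Type*} [MetricSpace X] [CompleteSpace X] {u : ℕ → X}
    {r : ℝ} (hr : r < 1) (h : ∀ᶠ n in atTop, dist (u n) (u (n + 1)) ≤ r ^ n) :
    ∃ v, Tendsto u atTop (𝓝 v) ∧ ∀ᶠ n in atTop, dist (u n) v ≤ (1 - r)⁻¹ * r ^ n := by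
  obtain ⟨N, hN⟩ := eventually_atTop.mp h
  have hshift : ∀ n, dist (u (n + N)) (u (n + 1 + N)) ≤ r ^ N * r ^ n := fun n => by
    have := hN (n + N) (by omega)
    rwa [show n + N + 1 = n + 1 + N by ring, pow_add, mul_comm] at this
  obtain ⟨v, hv⟩ := cauchySeq_tendsto_of_complete (cauchySeq_of_le_geometric r _ hr hshift)
  refine ⟨v, (tendsto_add_atTop_iff_nat N).mp hv, ?_⟩
  filter_upwards [eventually_ge_atTop N] with n hn
  have := dist_le_of_le_geometric_of_tendsto r _ hr hshift hv (n - N)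
  rwa [← pow_add, Nat.sub_add_cancel hn, Nat.add_sub_cancel' hn, div_eq_inv_mul] at this

theorem HasExpRateLE.exists_tendsto {X : Type*} [MetricSpace X] [CompleteSpace X] {u : ℕ → X}
    (h : HasExpRateLE (fun n => dist (u n) (u (n + 1))) c) (hc : c < 0) :
    ∃ v, Tendsto u atTop (𝓝 v) ∧ HasExpRateLE (fun n => dist (u n) v) c := by
  have hgeom : ∀ b, c < b → b < 0 → ∃ v, Tendsto u atTop (𝓝 v) ∧
      ∀ᶠ n : ℕ in atTop, dist (u n) v ≤ (1 - Real.exp b)⁻¹ * Real.exp (b * n) := fun b hcb hb => by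
    simpa only [← Real.exp_nat_mul, mul_comm b] using dist_le_geometric_of_eventually
      (Real.exp_lt_one_iff.mpr hb) (by simpa only [← Real.exp_nat_mul, mul_comm] using h b hcb)
  obtain ⟨b₀, hcb₀, hb₀⟩ := exists_between hc
  obtain ⟨v, hv, -⟩ := hgeom b₀ hcb₀ hb₀
  refine ⟨v, hv, fun b hb => ?_⟩
  obtain ⟨b', hcb', hb'⟩ := exists_between (lt_min hb hc)
  obtain ⟨v', hv', hrate⟩ := hgeom b' hcb' (hb'.trans_le (min_le_right _ _))
  rw [tendsto_nhds_unique hv hv']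
  filter_upwards [hrate, eventually_mul_exp_le (1 - Real.exp b')⁻¹
    (hb'.trans_le (min_le_left _ _))] with n h₁ h₂ using h₁.trans h₂

end ExponentialRates

section SlowSubmodule

open Module

variable {E F : Type*} [NormedAddCommGroup E] [InnerProductSpace ℝ E]
  [NormedAddCommGroup F] [InnerProductSpace ℝ F]
  {a : ℕ → F →L[ℝ] F} {B : ℕ → E →L[ℝ] F} {U : ℕ → Submodule ℝ E} {V : Submodule ℝ E}
  {t s : ℕ → ℝ} {l c : ℝ} {r : ℕ}

/-- `V` consists of the vectors that grow slowly under `B`: those of `V` grow at rate at most `c`,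
all others at rate at least `l`. -/
structure IsGrowthSplitting (B : ℕ → E →L[ℝ] F) (V : Submodule ℝ E) (c l : ℝ) : Prop where
  hasExpRateLE : ∀ v ∈ V, HasExpRateLE (fun n => ‖B n v‖) c
  hasExpRateGE : ∀ v ∉ V, HasExpRateGE (fun n => ‖B n v‖) l

theorem IsGrowthSplitting.mem_of_forall_eq_zero (hV : IsGrowthSplitting B V c l) {v : E}
    (hv : ∀ n, B n v = 0) : v ∈ V := by
  by_contra hvV
  obtain ⟨n, hn⟩ := (hV.hasExpRateGE v hvV).eventually_pos.exists
  rw [hv n, norm_zero] at hn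
  exact hn.false

variable [FiniteDimensional ℝ E]

theorem hasExpRateLE_dist_starProjection_succ (hBa : ∀ n, B (n + 1) = a n ∘L B n)
    (hU : ∀ n, IsSlowSubspace (B n) (U n) (t n) (s n)) (hr : ∀ n, finrank ℝ (U n) = r)
    (ht0 : ∀ n, 0 ≤ t n) (hs0 : ∀ n, 0 ≤ s n) (ha : HasExpRateLE (fun n => ‖a n‖) 0)
    (ht : HasExpRateLE t c) (hs : HasExpRateGE s l) (hcl : c < l) :
    HasExpRateLE (fun n => dist (U n).starProjection (U (n + 1)).starProjection) (c - l) := by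
  set δ : ℕ → ℝ := fun n => ‖a n‖ * t n * (s (n + 1))⁻¹
  have hδ0 : ∀ n, 0 ≤ δ n := fun n =>
    mul_nonneg (mul_nonneg (norm_nonneg _) (ht0 n)) (inv_nonneg.mpr (hs0 _))
  have hδ : HasExpRateLE δ (c - l) :=
    ((ha.mul ht ht0).mul hs.comp_add_one.inv fun n => inv_nonneg.mpr (hs0 _)).mono (by linarith)
  refine (hδ.const_mul zero_le_three).of_eventually_le ?_
  filter_upwards [(hδ.tendsto_zero (by linarith) hδ0).eventually (gt_mem_nhds one_half_pos),
    hs.comp_add_one.eventually_pos] with n hδn hsn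
  rw [dist_eq_norm]
  refine (hU n).norm_starProjection_sub_le (hBa n ▸ hU (n + 1)) ((hr n).trans (hr _).symm) hsn
    (hδ0 n) hδn.le (inv_mul_cancel_right₀ hsn.ne' _).ge

theorem hasExpRateLE_norm_comp_starProjection
    (hU : ∀ n, IsSlowSubspace (B n) (U n) (t n) (s n)) (ht0 : ∀ n, 0 ≤ t n)
    (hB : HasExpRateLE (fun n => ‖B n‖) l) (ht : HasExpRateLE t c)
    (hV : HasExpRateLE (fun n => dist (U n).starProjection V.starProjection) (c - l)) :
    HasExpRateLE (fun n => ‖B n ∘L V.starProjection‖) c := by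
  have hsum := ht.add ((hB.mul hV fun _ => dist_nonneg).mono (add_sub_cancel l c).le)
  refine hsum.of_eventually_le (Eventually.of_forall fun n => ?_)
  rw [dist_eq_norm]
  exact (hU n).norm_comp_starProjection_le (ht0 n) V

theorem hasExpRateGE_norm_apply_of_notMem
    (hU : ∀ n, IsSlowSubspace (B n) (U n) (t n) (s n)) (hs : HasExpRateGE s l)
    (hV : Tendsto (fun n => (U n).starProjection) atTop (𝓝 V.starProjection)) {v : E} (hv : v ∉ V) :
    HasExpRateGE (fun n => ‖B n v‖) l := by
  have hpos : 0 < ‖v - V.starProjection v‖ := by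
    rw [norm_pos_iff, sub_ne_zero]
    exact fun h => hv (V.starProjection_eq_self_iff.mp h.symm)
  have hlim : Tendsto (fun n => ‖v - (U n).starProjection v‖) atTop
      (𝓝 ‖v - V.starProjection v‖) :=
    (tendsto_const_nhds.sub (((ContinuousLinearMap.apply ℝ E v).continuous.tendsto _).comp hV)).norm
  refine (hs.const_mul (half_pos hpos)).of_eventually_le ?_
  filter_upwards [hlim.eventually (lt_mem_nhds (half_lt_self hpos)), hs.eventually_pos]
    with n hn hsn
  calc _ ≤ ‖v - (U n).starProjection v‖ * s n := by gcongr
    _ = s n * ‖v - (U n).starProjection v‖ := mul_comm _ _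
    _ ≤ ‖B n v‖ := (hU n).le_norm_map v

theorem tendsto_gramResolvent_smul [FiniteDimensional ℝ F] {b : ℝ}
    (hU : ∀ n, IsSlowSubspace (B n) (U n) (t n) (s n)) (hs0 : ∀ n, 0 ≤ s n)
    (hs : HasExpRateGE s l) (hbl : b < l)
    (hV : Tendsto (fun n => (U n).starProjection) atTop (𝓝 V.starProjection))
    (hBV : HasExpRateLE (fun n => ‖B n ∘L V.starProjection‖) c) (hcb : c < b) :
    Tendsto (fun n : ℕ => gramResolvent (Real.exp (-b * n) • B n)) atTop (𝓝 V.starProjection) := by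
  have hexpand := (HasExpRateGE.exp (-b)).mul hs
  have hcontract := (HasExpRateLE.exp (-b)).mul hBV fun _ => norm_nonneg _
  have hinv := hexpand.inv.tendsto_zero (by linarith) fun n =>
    inv_nonneg.mpr (mul_nonneg (Real.exp_pos _).le (hs0 n))
  have hzero := hcontract.tendsto_zero (by linarith) fun _ => by positivity
  have hlim := (hinv.add (tendsto_iff_norm_sub_tendsto_zero.mp hV)).add hzero
  rw [add_zero, add_zero] at hlim
  refine tendsto_iff_norm_sub_tendsto_zero.mpr
    (squeeze_zero' (Eventually.of_forall fun _ => norm_nonneg _) ?_ hlim)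
  filter_upwards [hs.eventually_pos] with n hsn
  have hX : ∀ v, Real.exp (-b * n) * s n * ‖v - (U n).starProjection v‖
      ≤ ‖(Real.exp (-b * n) • B n) v‖ := fun v => by
    rw [smul_apply, norm_smul, Real.norm_of_nonneg (Real.exp_pos _).le, mul_assoc]
    exact mul_le_mul_of_nonneg_left ((hU n).le_norm_map v) (Real.exp_pos _).le
  refine (norm_gramResolvent_sub_starProjection_le (by positivity) hX V).trans_eq ?_
  rw [ContinuousLinearMap.smul_comp, norm_smul, Real.norm_of_nonneg (Real.exp_pos _).le]

/-- The singular values of `B n` of index at most `m` grow at the exact rate `l`, the others at rate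
at most `c`. -/
structure HasSingularValueRates [FiniteDimensional ℝ F] (B : ℕ → E →L[ℝ] F) (m : ℕ) (c l : ℝ) :
    Prop where
  norm_le : HasExpRateLE (fun n => ‖B n‖) l
  singularValues_ge : HasExpRateGE (fun n => (B n : E →ₗ[ℝ] F).singularValues m) l
  singularValues_succ_le : HasExpRateLE (fun n => (B n : E →ₗ[ℝ] F).singularValues (m + 1)) c

theorem HasSingularValueRates.exists_isGrowthSplitting [FiniteDimensional ℝ F] {m : ℕ} {b : ℝ}
    (hB : HasSingularValueRates B m c l) (hBa : ∀ n, B (n + 1) = a n ∘L B n)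
    (hm : m + 1 ≤ finrank ℝ E) (hcb : c < b) (hbl : b < l) (ha : HasExpRateLE (fun n => ‖a n‖) 0) :
    ∃ V : Submodule ℝ E, finrank ℝ V + (m + 1) = finrank ℝ E ∧ IsGrowthSplitting B V c l ∧
      Tendsto (fun n : ℕ => gramResolvent (Real.exp (-b * n) • B n)) atTop
        (𝓝 V.starProjection) := by
  choose U hUfinrank hU using fun n => exists_isSlowSubspace (B n) hm
  have hr : ∀ n, finrank ℝ (U n) = finrank ℝ E - (m + 1) := fun n => by
    have := hUfinrank n
    omega
  have hσ : ∀ i n, 0 ≤ (B n : E →ₗ[ℝ] F).singularValues i := fun i n =>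
    LinearMap.singularValues_nonneg _ i
  obtain ⟨P, hP, hrate⟩ := (hasExpRateLE_dist_starProjection_succ hBa hU hr (hσ _) (hσ _) ha
    hB.singularValues_succ_le hB.singularValues_ge (hcb.trans hbl)).exists_tendsto (by linarith)
  obtain ⟨V, hVr, rfl⟩ := exists_eq_starProjection_of_tendsto hr hP
  have hBV := hasExpRateLE_norm_comp_starProjection hU (hσ _) hB.norm_le
    hB.singularValues_succ_le hrate
  refine ⟨V, by omega,
    ⟨fun v hv => ?_, fun v hv => hasExpRateGE_norm_apply_of_notMem hU hB.singularValues_ge hP hv⟩,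
    tendsto_gramResolvent_smul hU (hσ _) hB.singularValues_ge hbl hP hBV hcb⟩
  refine (hBV.const_mul (norm_nonneg v)).of_eventually_le (Eventually.of_forall fun n => ?_)
  calc ‖B n v‖ = ‖(B n ∘L V.starProjection) v‖ := by simp [V.starProjection_eq_self_iff.mpr hv]
    _ ≤ ‖v‖ * ‖B n ∘L V.starProjection‖ :=
      (ContinuousLinearMap.le_opNorm _ v).trans_eq (mul_comm _ _)

end SlowSubmodule

section Cocycle

variable {Ω E : Type*} [NormedAddCommGroup E] [NormedSpace ℝ E]

/-- The iterates `a (T^[n - 1] ω) ⋯ a (T ω) a ω` of a cocycle of linear operators. -/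
noncomputable def cocycleProd (T : Ω → Ω) (a : Ω → E →L[ℝ] E) : ℕ → Ω → E →L[ℝ] E
  | 0, _ => 1
  | n + 1, ω => cocycleProd T a n (T ω) * a ω

theorem cocycleProd_add (T : Ω → Ω) (a : Ω → E →L[ℝ] E) (m n : ℕ) (ω : Ω) :
    cocycleProd T a (m + n) ω = cocycleProd T a n (T^[m] ω) * cocycleProd T a m ω := by
  induction m generalizing ω with
  | zero => simp [cocycleProd]
  | succ m ih =>
    rw [show m + 1 + n = (m + n) + 1 by ring, cocycleProd, ih, cocycleProd, mul_assoc,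
      Function.iterate_succ_apply]

theorem cocycleProd_succ (T : Ω → Ω) (a : Ω → E →L[ℝ] E) (n : ℕ) (ω : Ω) :
    cocycleProd T a (n + 1) ω = a (T^[n] ω) * cocycleProd T a n ω := by
  rw [cocycleProd_add, cocycleProd, cocycleProd, one_mul]

theorem injective_cocycleProd (T : Ω → Ω) {a : Ω → E →L[ℝ] E}
    (hinj : ∀ ω, Function.Injective (a ω)) (n : ℕ) (ω : Ω) :
    Function.Injective (cocycleProd T a n ω) := by
  induction n generalizing ω with
  | zero => exact Function.injective_id
  | succ n ih => exact (ih (T ω)).comp (hinj ω)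

theorem norm_cocycleProd_apply_pos (T : Ω → Ω) {a : Ω → E →L[ℝ] E}
    (hinj : ∀ ω, Function.Injective (a ω)) (n : ℕ) (ω : Ω) {v : E} (hv : v ≠ 0) :
    0 < ‖cocycleProd T a n ω v‖ := by
  rw [norm_pos_iff, map_ne_zero_iff _ (injective_cocycleProd T hinj n ω)]
  exact hv

variable [MeasurableSpace Ω]

theorem ae_hasExpRateLE_norm_iterate {μ : Measure Ω} [IsProbabilityMeasure μ] {T : Ω → Ω}
    (hT : Ergodic T μ) {a : Ω → E →L[ℝ] E}
    (hlog : Integrable (fun ω => max (Real.log ‖a ω‖) 0) μ) :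
    ∀ᵐ ω ∂μ, HasExpRateLE (fun n => ‖a (T^[n] ω)‖) 0 := by
  filter_upwards [ae_tendsto_sum_Ico_iterate_div hT hlog 1] with ω hω b hb
  filter_upwards [(tendsto_add_atTop_nat 1).eventually (hω.eventually (gt_mem_nhds (half_pos hb))),
    eventually_ge_atTop 1] with n hn hn1
  have hn1' : (1 : ℝ) ≤ n := by exact_mod_cast hn1
  rw [Nat.add_sub_cancel, Nat.Ico_succ_singleton, Finset.sum_singleton,
    div_lt_iff₀ (by positivity), max_lt_iff, Nat.cast_add_one] at hn
  rcases (norm_nonneg (a (T^[n] ω))).eq_or_lt with h0 | h0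
  · exact h0 ▸ (Real.exp_pos _).le
  · exact (Real.log_le_iff_le_exp h0).mp (by nlinarith)

theorem measurable_cocycleProd [FiniteDimensional ℝ E] {T : Ω → Ω} (hT : Measurable T)
    {a : Ω → E →L[ℝ] E} (ha : Measurable a) (n : ℕ) : Measurable (cocycleProd T a n) := by
  induction n with
  | zero => exact measurable_const
  | succ n ih => exact (ih.comp hT).mul ha

end Cocycle

section RestrictedCocycle

open Module

theorem tendsto_log_singularValues_div {E F : Type*} [NormedAddCommGroup E] [InnerProductSpace ℝ E]
    [FiniteDimensional ℝ E] [NormedAddCommGroup F] [InnerProductSpace ℝ F] [FiniteDimensional ℝ F]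
    {X : ℕ → E →ₗ[ℝ] F} {q : ℕ} (hpos : ∀ n, q < finrank ℝ (X n).range) {L L' : EReal}
    (hL_ne_top : L ≠ ⊤)
    (hL : Tendsto (fun n : ℕ => ((Real.log (volGrowth q (X n)) / n : ℝ) : EReal)) atTop (𝓝 L))
    (hL' : Tendsto (fun n : ℕ => ((Real.log (volGrowth (q + 1) (X n)) / n : ℝ) : EReal)) atTop
      (𝓝 L')) :
    Tendsto (fun n : ℕ => ((Real.log ((X n).singularValues q) / n : ℝ) : EReal)) atTop
      (𝓝 (if L = ⊥ then ⊥ else L' - L)) := by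
  have hσ : ∀ n, 0 < (X n).singularValues q := fun n =>
    (X n).singularValues_pos_iff_lt_finrank_range.mpr (hpos n)
  split_ifs with hbot
  · subst hbot
    have hq : q ≠ 0 := by
      rintro rfl
      simp only [volGrowth, Finset.range_zero, Finset.prod_empty, Real.log_one, zero_div] at hL
      exact EReal.coe_ne_bot 0 (tendsto_nhds_unique tendsto_const_nhds hL)
    refine HasExpRateLE.tendsto_log_div_bot hσ fun c =>
      .of_pow hq (fun n => (hσ n).le) (.of_eventually_le ?_ (.of_forall fun n =>
        singularValues_pow_le_volGrowth (X n) q))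
    exact .of_tendsto_log_div (fun n => volGrowth_nonneg q _) hL bot_le
  · have hadd := EReal.continuousAt_add (p := (L', -L))
      (.inr (EReal.neg_eq_bot_iff.not.mpr hL_ne_top)) (.inr (EReal.neg_eq_top_iff.not.mpr hbot))
    refine (hadd.tendsto.comp (hL'.prodMk_nhds (continuous_neg.continuousAt.tendsto.comp hL))).congr
      fun n => ?_
    rw [Function.comp_apply, Function.comp_apply, volGrowth_succ,
      Real.log_mul (volGrowth_pos (hpos n).le).ne' (hσ n).ne', ← EReal.coe_neg, ← EReal.coe_add]
    congr 1
    ring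

variable {Ω E : Type*} [NormedAddCommGroup E] [InnerProductSpace ℝ E] [FiniteDimensional ℝ E]

/-- The iterates of a cocycle restricted to a family of subspaces, extended by zero on the
orthogonal complements so that all of them are operators on the same space. -/
noncomputable def restrictedProd (T : Ω → Ω) (a : Ω → E →L[ℝ] E) (W : Ω → Submodule ℝ E) (n : ℕ)
    (ω : Ω) : E →L[ℝ] E :=
  cocycleProd T a n ω * (W ω).starProjection

variable {T : Ω → Ω} {a : Ω → E →L[ℝ] E} {W : Ω → Submodule ℝ E}

theorem restrictedProd_succ (n : ℕ) (ω : Ω) :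
    restrictedProd T a W (n + 1) ω = a (T^[n] ω) * restrictedProd T a W n ω := by
  rw [restrictedProd, cocycleProd_succ, mul_assoc, restrictedProd]

theorem restrictedProd_apply {ω : Ω} {v : E} (hv : v ∈ W ω) (n : ℕ) :
    restrictedProd T a W n ω v = cocycleProd T a n ω v := by
  rw [restrictedProd, mul_apply_eq_comp, (W ω).starProjection_eq_self_iff.mpr hv]

theorem restrictedProd_apply_of_mem_orthogonal {ω : Ω} {v : E} (hv : v ∈ (W ω)ᗮ) (n : ℕ) :
    restrictedProd T a W n ω v = 0 := by
  rw [restrictedProd, mul_apply_eq_comp, (W ω).starProjection_apply_eq_zero_iff.mpr hv, map_zero]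

theorem finrank_range_restrictedProd (hinj : ∀ ω, Function.Injective (a ω)) (n : ℕ) (ω : Ω) :
    finrank ℝ (restrictedProd T a W n ω).range = finrank ℝ (W ω) := by
  have hrange := LinearMap.range_comp (W ω).starProjection.toLinearMap
    (cocycleProd T a n ω).toLinearMap
  rw [Submodule.range_starProjection] at hrange
  exact (congrArg (fun V : Submodule ℝ E => finrank ℝ V) hrange).trans
    ((W ω).equivMapOfInjective _ (injective_cocycleProd T hinj n ω)).finrank_eq.symm

theorem singularValues_restrictedProd_pos_iff (hinj : ∀ ω, Function.Injective (a ω)) {n i : ℕ}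
    {ω : Ω} :
    0 < (restrictedProd T a W n ω : E →ₗ[ℝ] E).singularValues i ↔ i < finrank ℝ (W ω) := by
  rw [LinearMap.singularValues_pos_iff_lt_finrank_range, finrank_range_restrictedProd hinj]

variable [MeasurableSpace Ω] {μ : Measure Ω}

/-- A measurable family of subspaces, almost surely of dimension `r` and invariant under the
cocycle `a`. Measurability is that of the orthogonal projections. -/
structure IsInvariantFamily (μ : Measure Ω) (T : Ω → Ω) (a : Ω → E →L[ℝ] E) (r : ℕ)
    (W : Ω → Submodule ℝ E) : Prop where
  measurable : Measurable fun ω => (W ω).starProjection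
  finrank_eq : ∀ᵐ ω ∂μ, finrank ℝ (W ω) = r
  map_eq : ∀ᵐ ω ∂μ, (W ω).map (a ω).toLinearMap = W (T ω)

theorem isInvariantFamily_bot : IsInvariantFamily μ T a 0 fun _ => ⊥ where
  measurable := measurable_const
  finrank_eq := by simp
  map_eq := by simp

theorem isInvariantFamily_top (hinj : ∀ ω, Function.Injective (a ω)) :
    IsInvariantFamily μ T a (finrank ℝ E) fun _ => ⊤ where
  measurable := measurable_const
  finrank_eq := by simp
  map_eq := .of_forall fun ω => by
    rw [Submodule.map_top, LinearMap.range_eq_top]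
    exact LinearMap.surjective_of_injective (hinj ω)

namespace IsInvariantFamily

variable {r : ℕ}

theorem map_cocycleProd (hW : IsInvariantFamily μ T a r W) (hT : MeasurePreserving T μ μ) :
    ∀ᵐ ω ∂μ, ∀ n, (W ω).map (cocycleProd T a n ω).toLinearMap = W (T^[n] ω) := by
  filter_upwards [ae_forall_iterate hT hW.map_eq] with ω hω n
  induction n with
  | zero => exact Submodule.map_id _
  | succ n ih =>
    rw [Function.iterate_succ_apply', ← hω n, ← ih, ← Submodule.map_comp, cocycleProd_succ]
    rfl

theorem restrictedProd_add (hW : IsInvariantFamily μ T a r W) (hT : MeasurePreserving T μ μ) :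
    ∀ᵐ ω ∂μ, ∀ m n, restrictedProd T a W (m + n) ω
      = restrictedProd T a W n (T^[m] ω) * restrictedProd T a W m ω := by
  filter_upwards [hW.map_cocycleProd hT] with ω hω m n
  ext v
  have hmem : cocycleProd T a m ω ((W ω).starProjection v) ∈ W (T^[m] ω) :=
    hω m ▸ Submodule.mem_map_of_mem ((W ω).starProjection_apply_mem v)
  calc restrictedProd T a W (m + n) ω v
      = cocycleProd T a n (T^[m] ω) (cocycleProd T a m ω ((W ω).starProjection v)) := by
        rw [restrictedProd, cocycleProd_add]
        rfl
    _ = _ := (restrictedProd_apply hmem n).symm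

theorem measurable_restrictedProd (hW : IsInvariantFamily μ T a r W) (hT : Measurable T)
    (ha : Measurable a) (n : ℕ) : Measurable (restrictedProd T a W n) :=
  (measurable_cocycleProd hT ha n).mul hW.measurable

theorem ae_volGrowth_pos (hW : IsInvariantFamily μ T a r W)
    (hinj : ∀ ω, Function.Injective (a ω)) {q : ℕ} (hq : q ≤ r) :
    ∀ᵐ ω ∂μ, ∀ n, 0 < volGrowth q (restrictedProd T a W n ω : E →ₗ[ℝ] E) := by
  filter_upwards [hW.finrank_eq] with ω hω n
  exact volGrowth_pos (by rwa [finrank_range_restrictedProd hinj, hω])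

theorem isSubadditiveProcess_log_volGrowth (hW : IsInvariantFamily μ T a r W)
    (hT : MeasurePreserving T μ μ) (ha : Measurable a) (hinj : ∀ ω, Function.Injective (a ω))
    (hlog : Integrable (fun ω => max (Real.log ‖a ω‖) 0) μ) {q : ℕ} (hq : q ≤ r) :
    IsSubadditiveProcess μ T fun n ω =>
      Real.log (volGrowth q (restrictedProd T a W n ω : E →ₗ[ℝ] E)) where
  measurable n := Real.measurable_log.comp
    ((measurable_volGrowth q).comp (hW.measurable_restrictedProd hT.measurable ha n))
  zero_nonpos := by
    refine .of_forall fun ω => Real.log_nonpos (volGrowth_nonneg _ _) <|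
      (volGrowth_le_norm_pow _ _).trans (pow_le_one₀ (norm_nonneg _) ?_)
    rw [restrictedProd, cocycleProd, one_mul]
    exact (W ω).starProjection_norm_le
  add_le := by
    filter_upwards [hW.restrictedProd_add hT,
      ae_forall_iterate hT (hW.ae_volGrowth_pos hinj hq)] with ω hadd hpos m n
    have hm : 0 < volGrowth q (restrictedProd T a W m ω : E →ₗ[ℝ] E) := hpos 0 m
    rw [add_comm (Real.log (volGrowth q (restrictedProd T a W m ω : E →ₗ[ℝ] E))),
      ← Real.log_mul (hpos m n).ne' hm.ne']
    refine Real.log_le_log (hpos 0 (m + n)) ?_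
    rw [hadd m n]
    exact volGrowth_comp_le q _ _
  integrable_posPart := by
    have hmeas : Measurable fun ω =>
        Real.log (volGrowth q (restrictedProd T a W 1 ω : E →ₗ[ℝ] E)) :=
      Real.measurable_log.comp
        ((measurable_volGrowth q).comp (hW.measurable_restrictedProd hT.measurable ha 1))
    refine (hlog.const_mul q).mono' (hmeas.max measurable_const).aestronglyMeasurable ?_
    filter_upwards [hW.ae_volGrowth_pos hinj hq] with ω hpos
    have hnorm : ‖restrictedProd T a W 1 ω‖ ≤ ‖a ω‖ := by
      rw [restrictedProd, cocycleProd, cocycleProd, one_mul]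
      exact (norm_mul_le _ _).trans
        (mul_le_of_le_one_right (norm_nonneg _) (W ω).starProjection_norm_le)
    rw [Real.norm_of_nonneg (le_max_right _ _)]
    refine max_le ?_ (by positivity)
    calc Real.log (volGrowth q (restrictedProd T a W 1 ω : E →ₗ[ℝ] E))
        ≤ Real.log (‖a ω‖ ^ q) := Real.log_le_log (hpos 1)
          ((volGrowth_le_norm_pow _ _).trans (by gcongr))
      _ = q * Real.log ‖a ω‖ := Real.log_pow _ _
      _ ≤ q * max (Real.log ‖a ω‖) 0 := by gcongr; exact le_max_left _ _

theorem exists_tendsto_log_singularValues_div [IsProbabilityMeasure μ]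
    (hW : IsInvariantFamily μ T a r W) (hT : Ergodic T μ) (ha : Measurable a)
    (hinj : ∀ ω, Function.Injective (a ω))
    (hlog : Integrable (fun ω => max (Real.log ‖a ω‖) 0) μ) {i : ℕ} (hi : i < r) :
    ∃ χ : EReal, χ ≠ ⊤ ∧ ∀ᵐ ω ∂μ, Tendsto (fun n : ℕ => ((Real.log
      ((restrictedProd T a W n ω : E →ₗ[ℝ] E).singularValues i) / n : ℝ) : EReal)) atTop (𝓝 χ) := by
  obtain ⟨L, hL, hlim⟩ := (hW.isSubadditiveProcess_log_volGrowth hT.toMeasurePreserving ha hinj hlog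
    hi.le).exists_ae_tendsto_div hT
  obtain ⟨L', hL', hlim'⟩ := (hW.isSubadditiveProcess_log_volGrowth hT.toMeasurePreserving ha hinj
    hlog (Nat.succ_le_of_lt hi)).exists_ae_tendsto_div hT
  refine ⟨if L = ⊥ then ⊥ else L' - L, ?_, ?_⟩
  · split_ifs with hbot
    · exact bot_ne_top
    · exact (EReal.add_lt_top hL' (EReal.neg_eq_top_iff.not.mpr hbot)).ne
  · filter_upwards [hlim, hlim', hW.finrank_eq] with ω h h' hfinrank
    refine tendsto_log_singularValues_div (fun n => ?_) hL h h'
    exact hi.trans_eq ((finrank_range_restrictedProd hinj n ω).trans hfinrank).symm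

end IsInvariantFamily

end RestrictedCocycle

section SlowSubfamily

open Module

variable {Ω E : Type*} [NormedAddCommGroup E] [InnerProductSpace ℝ E] [FiniteDimensional ℝ E]

theorem starProjection_inf_of_orthogonal_le {U W : Submodule ℝ E} (h : Wᗮ ≤ U) :
    (U ⊓ W).starProjection = W.starProjection + U.starProjection - 1 := by
  have h' : Uᗮ ≤ W := W.orthogonal_orthogonal ▸ Submodule.orthogonal_le h
  ext v
  have hW : v - W.starProjection v ∈ Wᗮ := Submodule.sub_starProjection_mem_orthogonal v
  have hU : v - U.starProjection v ∈ Uᗮ := Submodule.sub_starProjection_mem_orthogonal v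
  refine Submodule.eq_starProjection_of_mem_orthogonal (v := W.starProjection v +
    U.starProjection v - v) (Submodule.mem_inf.mpr ⟨?_, ?_⟩) ?_
  · convert U.sub_mem (U.starProjection_apply_mem v) (h hW) using 1
    abel
  · convert W.sub_mem (W.starProjection_apply_mem v) (h' hU) using 1
    abel
  · convert (U ⊓ W)ᗮ.add_mem (Submodule.orthogonal_le inf_le_right hW)
      (Submodule.orthogonal_le inf_le_left hU) using 1
    abel

theorem finrank_inf_add_of_orthogonal_le {U W : Submodule ℝ E} (h : Wᗮ ≤ U) :
    finrank ℝ (U ⊓ W : Submodule ℝ E) + finrank ℝ E = finrank ℝ U + finrank ℝ W := by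
  have htop : U ⊔ W = ⊤ := by
    rw [eq_top_iff, ← W.sup_orthogonal_of_hasOrthogonalProjection, sup_comm U]
    gcongr
  rw [← Submodule.finrank_sup_add_finrank_inf_eq, htop, finrank_top, add_comm]

theorem exists_lt_and_le_and_succ_lt {α : Type*} [LinearOrder α] (χ : ℕ → α) {r : ℕ} (hr : 0 < r) :
    ∃ m < r, χ 0 ≤ χ m ∧ (m + 1 < r → χ (m + 1) < χ 0) := by
  set m := Nat.findGreatest (fun m => χ 0 ≤ χ m) (r - 1) with hm
  have hmr : m ≤ r - 1 := Nat.findGreatest_le _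
  refine ⟨m, by omega, Nat.findGreatest_spec (P := fun m => χ 0 ≤ χ m) (Nat.zero_le _) le_rfl,
    fun h => not_le.mp ?_⟩
  exact Nat.findGreatest_is_greatest (hm ▸ Nat.lt_succ_self m) (by omega)

variable {T : Ω → Ω} {a : Ω → E →L[ℝ] E} {W : Ω → Submodule ℝ E} {c l : ℝ}

namespace IsGrowthSplitting

variable {ω : Ω} {U : Submodule ℝ E}

theorem orthogonal_le (hU : IsGrowthSplitting (fun n => restrictedProd T a W n ω) U c l) :
    (W ω)ᗮ ≤ U :=
  fun _ hv => hU.mem_of_forall_eq_zero (restrictedProd_apply_of_mem_orthogonal hv)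

theorem map_inf_le {U' : Submodule ℝ E}
    (hU : IsGrowthSplitting (fun n => restrictedProd T a W n ω) U c l)
    (hU' : IsGrowthSplitting (fun n => restrictedProd T a W n (T ω)) U' c l)
    (hW : (W ω).map (a ω).toLinearMap = W (T ω)) (hcl : c < l) :
    (U ⊓ W ω).map (a ω).toLinearMap ≤ U' ⊓ W (T ω) := by
  rintro _ ⟨v, ⟨hvU, hvW⟩, rfl⟩
  have hav : a ω v ∈ W (T ω) := hW ▸ Submodule.mem_map_of_mem hvW
  refine ⟨?_, hav⟩
  by_contra hfast
  have hle : HasExpRateLE (fun n => ‖cocycleProd T a (n + 1) ω v‖) c := by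
    simpa only [restrictedProd_apply hvW] using (hU.hasExpRateLE v hvU).comp_add_one
  have hge : HasExpRateGE (fun n => ‖cocycleProd T a n (T ω) (a ω v)‖) l := by
    simpa only [restrictedProd_apply hav] using hU'.hasExpRateGE (a ω v) hfast
  exact hcl.not_ge (hge.le_of_hasExpRateLE hle)

end IsGrowthSplitting

variable [MeasurableSpace Ω] {μ : Measure Ω}

theorem exists_measurable_starProjection_ae_eq
    (hW : AEMeasurable (fun ω => (W ω).starProjection) μ) :
    ∃ W' : Ω → Submodule ℝ E, Measurable (fun ω => (W' ω).starProjection) ∧ W' =ᵐ[μ] W := by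
  classical
  set N := toMeasurable μ {ω | (W ω).starProjection = hW.mk _ ω}ᶜ with hN
  have hN0 : μ N = 0 := by
    rw [hN, measure_toMeasurable]
    exact hW.ae_eq_mk
  have hpiecewise : (fun ω => (N.piecewise (fun _ => ⊥) W ω).starProjection)
      = N.piecewise (fun _ => 0) (hW.mk _) := by
    ext1 ω
    by_cases hω : ω ∈ N
    · simp [hω]
    · have heq : (W ω).starProjection = hW.mk _ ω := by
        by_contra hne
        exact hω (subset_toMeasurable _ _ hne)
      simp [hω, heq]
  refine ⟨N.piecewise (fun _ => ⊥) W, ?_, ?_⟩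
  · rw [hpiecewise]
    exact .piecewise (measurableSet_toMeasurable _ _) measurable_const hW.measurable_mk
  · filter_upwards [measure_eq_zero_iff_ae_notMem.mp hN0] with ω hω
    simp [hω]

namespace IsInvariantFamily

variable [IsProbabilityMeasure μ] {r m : ℕ}

theorem exists_ae_isGrowthSplitting (hW : IsInvariantFamily μ T a r W) (hT : Ergodic T μ)
    (ha : Measurable a) (hlog : Integrable (fun ω => max (Real.log ‖a ω‖) 0) μ) (hm : m < r)
    (hcl : c < l)
    (hrates : ∀ᵐ ω ∂μ, HasSingularValueRates (fun n => restrictedProd T a W n ω) m c l) :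
    ∃ U : Ω → Submodule ℝ E, AEMeasurable (fun ω => (U ω).starProjection) μ ∧
      ∀ᵐ ω ∂μ, finrank ℝ (U ω) + (m + 1) = finrank ℝ E ∧
        IsGrowthSplitting (fun n => restrictedProd T a W n ω) (U ω) c l := by
  obtain ⟨b, hcb, hbl⟩ := exists_between hcl
  have hex : ∀ᵐ ω ∂μ, ∃ U : Submodule ℝ E, finrank ℝ U + (m + 1) = finrank ℝ E ∧
      IsGrowthSplitting (fun n => restrictedProd T a W n ω) U c l ∧
      Tendsto (fun n : ℕ => gramResolvent (Real.exp (-b * n) • restrictedProd T a W n ω)) atTop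
        (𝓝 U.starProjection) := by
    filter_upwards [hrates, hW.finrank_eq, ae_hasExpRateLE_norm_iterate hT hlog]
      with ω hω hfinrank hslow
    exact hω.exists_isGrowthSplitting (fun n => restrictedProd_succ n ω)
      ((Nat.succ_le_of_lt hm).trans (hfinrank ▸ (W ω).finrank_le)) hcb hbl hslow
  obtain ⟨U, hU⟩ := hex.choice
  refine ⟨U, ?_, hU.mono fun ω h => ⟨h.1, h.2.1⟩⟩
  refine aemeasurable_of_tendsto_metrizable_ae atTop (fun n => ?_) (hU.mono fun ω h => h.2.2)
  have hmeas := (hW.measurable_restrictedProd hT.measurable ha n).const_smul (Real.exp (-b * n))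
  exact (continuous_gramResolvent.measurable.comp hmeas).aemeasurable

theorem exists_slow_subfamily (hW : IsInvariantFamily μ T a r W) (hT : Ergodic T μ)
    (ha : Measurable a) (hinj : ∀ ω, Function.Injective (a ω))
    (hlog : Integrable (fun ω => max (Real.log ‖a ω‖) 0) μ) (hm : m < r) (hcl : c < l)
    (hrates : ∀ᵐ ω ∂μ, HasSingularValueRates (fun n => restrictedProd T a W n ω) m c l) :
    ∃ W' : Ω → Submodule ℝ E, IsInvariantFamily μ T a (r - (m + 1)) W' ∧ ∀ᵐ ω ∂μ, W' ω ≤ W ω ∧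
      (∀ v ∈ W ω, v ∉ W' ω → HasExpRateGE (fun n => ‖cocycleProd T a n ω v‖) l) ∧
      ∀ v ∈ W' ω, HasExpRateLE (fun n => ‖cocycleProd T a n ω v‖) c := by
  obtain ⟨U, hUmeas, hU⟩ := hW.exists_ae_isGrowthSplitting hT ha hlog hm hcl hrates
  have hmeas : AEMeasurable (fun ω => (U ω ⊓ W ω).starProjection) μ := by
    refine ((hW.measurable.aemeasurable.add hUmeas).sub_const 1).congr ?_
    filter_upwards [hU] with ω h
    exact (starProjection_inf_of_orthogonal_le h.2.orthogonal_le).symm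
  obtain ⟨W', hW'meas, hW'⟩ := exists_measurable_starProjection_ae_eq hmeas
  have hfinrank : ∀ᵐ ω ∂μ, finrank ℝ (W' ω) = r - (m + 1) := by
    filter_upwards [hW', hU, hW.finrank_eq] with ω hω ⟨hUr, hUω⟩ hWr
    have := finrank_inf_add_of_orthogonal_le hUω.orthogonal_le
    rw [hω]
    omega
  refine ⟨W', ⟨hW'meas, hfinrank, ?_⟩, ?_⟩
  · have hT' := hT.quasiMeasurePreserving
    filter_upwards [hW', hT'.ae hW', hfinrank, hT'.ae hfinrank, hU, hT'.ae hU, hW.map_eq]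
      with ω hω hTω hr hTr ⟨_, hUω⟩ ⟨_, hUTω⟩ hmap
    refine Submodule.eq_of_le_of_finrank_eq ?_ ?_
    · rw [hω, hTω]
      exact hUω.map_inf_le hUTω hmap hcl
    · exact ((W' ω).equivMapOfInjective _ (hinj ω)).finrank_eq.symm.trans (hr.trans hTr.symm)
  · filter_upwards [hW', hU] with ω hω ⟨_, hUω⟩
    rw [hω]
    refine ⟨inf_le_right, fun v hv hv' => ?_, fun v hv => ?_⟩
    · simpa only [restrictedProd_apply hv] using hUω.hasExpRateGE v fun hvU => hv' ⟨hvU, hv⟩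
    · simpa only [restrictedProd_apply hv.2] using hUω.hasExpRateLE v hv.1

theorem exists_hasSingularValueRates (hW : IsInvariantFamily μ T a r W) (hT : Ergodic T μ)
    (ha : Measurable a) (hinj : ∀ ω, Function.Injective (a ω))
    (hlog : Integrable (fun ω => max (Real.log ‖a ω‖) 0) μ) (hr : 0 < r) :
    (∀ᵐ ω ∂μ, ∀ c, HasExpRateLE (fun n => ‖restrictedProd T a W n ω‖) c) ∨
      ∃ m < r, ∃ c l : ℝ, c < l ∧
        ∀ᵐ ω ∂μ, HasSingularValueRates (fun n => restrictedProd T a W n ω) m c l := by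
  choose! χ hχ_ne_top hχ using fun i (hi : i < r) =>
    hW.exists_tendsto_log_singularValues_div hT ha hinj hlog hi
  by_cases hbot : χ 0 = ⊥
  · left
    filter_upwards [hχ 0 hr] with ω hω c
    simpa only [singularValues_zero_eq_norm, hbot] using
      HasExpRateLE.of_tendsto_log_div (c := c) (fun n => LinearMap.singularValues_nonneg _ 0) hω
        (hbot ▸ bot_le)
  right
  obtain ⟨l, hl⟩ : ∃ l : ℝ, (l : EReal) = χ 0 :=
    ⟨(χ 0).toReal, EReal.coe_toReal (hχ_ne_top 0 hr) hbot⟩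
  obtain ⟨m, hm, hlm, hml⟩ := exists_lt_and_le_and_succ_lt χ hr
  obtain ⟨c, hcl, hsucc⟩ : ∃ c < l, ∀ᵐ ω ∂μ, HasExpRateLE
      (fun n => (restrictedProd T a W n ω : E →ₗ[ℝ] E).singularValues (m + 1)) c := by
    rcases lt_or_ge (m + 1) r with hmr | hmr
    · obtain ⟨c, hχc, hcl⟩ := EReal.lt_iff_exists_real_btwn.mp (hml hmr)
      refine ⟨c, EReal.coe_lt_coe_iff.mp (hl ▸ hcl), (hχ _ hmr).mono fun ω hω => ?_⟩
      exact .of_tendsto_log_div (fun n => LinearMap.singularValues_nonneg _ _) hω hχc.le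
    · refine ⟨l - 1, sub_one_lt l, hW.finrank_eq.mono fun ω hω b _ => .of_forall fun n => ?_⟩
      have hle := not_lt.mp ((singularValues_restrictedProd_pos_iff (T := T) (n := n) hinj).not.mpr
        (hω.trans_le hmr).not_gt)
      exact hle.trans (Real.exp_pos _).le
  refine ⟨m, hm, c, l, hcl, ?_⟩
  filter_upwards [hχ 0 hr, hχ m hm, hsucc, hW.finrank_eq] with ω hω₀ hωm hωsucc hfinrank
  refine ⟨?_, .of_tendsto_log_div (fun n => ?_) hωm (hl ▸ hlm), hωsucc⟩
  · simpa only [singularValues_zero_eq_norm] using HasExpRateLE.of_tendsto_log_div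
      (fun n => LinearMap.singularValues_nonneg _ 0) hω₀ hl.ge
  · exact (singularValues_restrictedProd_pos_iff hinj).mpr (hm.trans_eq hfinrank.symm)

theorem exists_next_subfamily (hW : IsInvariantFamily μ T a r W) (hT : Ergodic T μ)
    (ha : Measurable a) (hinj : ∀ ω, Function.Injective (a ω))
    (hlog : Integrable (fun ω => max (Real.log ‖a ω‖) 0) μ) (hr : 0 < r) :
    ∃ (l : EReal) (r' : ℕ) (W' : Ω → Submodule ℝ E), l ≠ ⊤ ∧ r' < r ∧
      IsInvariantFamily μ T a r' W' ∧ ∀ᵐ ω ∂μ, W' ω < W ω ∧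
      (∀ v ∈ W ω, v ∉ W' ω → Tendsto
        (fun n : ℕ => ((Real.log ‖cocycleProd T a n ω v‖ / n : ℝ) : EReal)) atTop (𝓝 l)) ∧
      ∀ v ∈ W' ω, v ≠ 0 → ∃ c : ℝ, c < l ∧ HasExpRateLE (fun n => ‖cocycleProd T a n ω v‖) c := by
  have hrate : ∀ {ω l}, HasExpRateLE (fun n => ‖restrictedProd T a W n ω‖) l → ∀ v ∈ W ω,
      HasExpRateLE (fun n => ‖cocycleProd T a n ω v‖) l := fun hω v hv =>
    (hω.const_mul (norm_nonneg v)).of_eventually_le <| .of_forall fun n => by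
      rw [← restrictedProd_apply hv, mul_comm]
      exact ContinuousLinearMap.le_opNorm _ v
  rcases hW.exists_hasSingularValueRates hT ha hinj hlog hr with hbot | ⟨m, hm, c, l, hcl, hrates⟩
  · refine ⟨⊥, 0, fun _ => ⊥, bot_ne_top, hr, isInvariantFamily_bot, ?_⟩
    filter_upwards [hbot, hW.finrank_eq] with ω hω hfinrank
    refine ⟨bot_lt_iff_ne_bot.mpr ?_, fun v hv hv0 => ?_, fun v hv hv0 => absurd hv hv0⟩
    · exact Submodule.one_le_finrank_iff.mp (hr.trans_eq hfinrank.symm)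
    · exact HasExpRateLE.tendsto_log_div_bot
        (fun n => norm_cocycleProd_apply_pos T hinj n ω hv0)
        fun c => hrate (hω c) v hv
  · obtain ⟨W', hW', hsplit⟩ := hW.exists_slow_subfamily hT ha hinj hlog hm hcl hrates
    refine ⟨l, r - (m + 1), W', EReal.coe_ne_top l, by omega, hW', ?_⟩
    filter_upwards [hrates, hsplit, hW.finrank_eq, hW'.finrank_eq]
      with ω hω ⟨hle, hfast, hslow⟩ hfinrank hfinrank'
    refine ⟨hle.lt_of_ne ?_, fun v hv hv' => ?_,
      fun v hv _ => ⟨c, EReal.coe_lt_coe_iff.mpr hcl, hslow v hv⟩⟩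
    · rintro heq
      rw [heq] at hfinrank'
      omega
    · exact (continuous_coe_real_ereal.tendsto l).comp
        ((hfast v hv hv').tendsto_log_div (hrate hω.norm_le v hv))

end IsInvariantFamily

end SlowSubfamily

section LyapunovFiltration

open Module

variable {Ω E : Type*} [MeasurableSpace Ω] {μ : Measure Ω} {T : Ω → Ω} [NormedAddCommGroup E]
  [InnerProductSpace ℝ E] [FiniteDimensional ℝ E] {a : Ω → E →L[ℝ] E}

/-- A filtration by Lyapunov exponents: a decreasing sequence of measurable families of subspaces,
almost surely invariant under the cocycle `a` and ending at `⊥`, such that the vectors of `V i` that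
are not in `V (i + 1)` grow at the exact exponential rate `lam i`. -/
structure IsLyapunovFiltration (μ : Measure Ω) (T : Ω → Ω) (a : Ω → E →L[ℝ] E) {k : ℕ}
    (lam : Fin k → EReal) (V : Fin (k + 1) → Ω → Submodule ℝ E) : Prop where
  strictAnti : StrictAnti lam
  ne_top : ∀ i, lam i ≠ ⊤
  measurable : ∀ i, Measurable fun ω => (V i ω).starProjection
  last_eq_bot : ∀ᵐ ω ∂μ, V (Fin.last k) ω = ⊥
  lt : ∀ᵐ ω ∂μ, ∀ i : Fin k, V i.succ ω < V i.castSucc ω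
  map_eq : ∀ᵐ ω ∂μ, ∀ i, (V i ω).map (a ω).toLinearMap = V i (T ω)
  tendsto : ∀ᵐ ω ∂μ, ∀ i : Fin k, ∀ v ∈ V i.castSucc ω, v ∉ V i.succ ω → Tendsto
    (fun n : ℕ => ((Real.log ‖cocycleProd T a n ω v‖ / n : ℝ) : EReal)) atTop (𝓝 (lam i))

namespace IsLyapunovFiltration

variable {k : ℕ} {lam : Fin k → EReal} {V : Fin (k + 1) → Ω → Submodule ℝ E}
  {W : Ω → Submodule ℝ E} {l : EReal}

theorem nil (hW : IsInvariantFamily μ T a 0 W) :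
    IsLyapunovFiltration μ T a Fin.elim0 fun _ : Fin 1 => W where
  strictAnti i := i.elim0
  ne_top i := i.elim0
  measurable _ := hW.measurable
  last_eq_bot := hW.finrank_eq.mono fun _ h => Submodule.finrank_eq_zero.mp h
  lt := .of_forall fun _ i => i.elim0
  map_eq := hW.map_eq.mono fun _ h _ => h
  tendsto := .of_forall fun _ i => i.elim0

theorem cons {r : ℕ} (hV : IsLyapunovFiltration μ T a lam V) (hW : IsInvariantFamily μ T a r W)
    (hl : l ≠ ⊤) (hlam : ∀ i, lam i < l) (hlt : ∀ᵐ ω ∂μ, V 0 ω < W ω)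
    (htendsto : ∀ᵐ ω ∂μ, ∀ v ∈ W ω, v ∉ V 0 ω → Tendsto
      (fun n : ℕ => ((Real.log ‖cocycleProd T a n ω v‖ / n : ℝ) : EReal)) atTop (𝓝 l)) :
    IsLyapunovFiltration μ T a (Fin.cons l lam : Fin (k + 1) → EReal)
      (Fin.cons W V : Fin (k + 2) → Ω → Submodule ℝ E) where
  strictAnti i j hij := by
    induction j using Fin.cases with
    | zero => exact absurd hij (Fin.not_lt_zero i)
    | succ j =>
      induction i using Fin.cases with
      | zero => exact hlam j
      | succ i => exact hV.strictAnti (Fin.succ_lt_succ_iff.mp hij)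
  ne_top := Fin.cases hl hV.ne_top
  measurable := Fin.cases hW.measurable hV.measurable
  last_eq_bot := hV.last_eq_bot
  lt := by
    filter_upwards [hV.lt, hlt] with ω hω hω₀
    exact Fin.cases hω₀ hω
  map_eq := by
    filter_upwards [hV.map_eq, hW.map_eq] with ω hω hω₀
    exact Fin.cases hω₀ hω
  tendsto := by
    filter_upwards [hV.tendsto, htendsto] with ω hω hω₀
    exact Fin.cases hω₀ hω

theorem exponent_lt [NeZero μ] (hV : IsLyapunovFiltration μ T a lam V)
    (hinj : ∀ ω, Function.Injective (a ω))
    (hslow : ∀ᵐ ω ∂μ, ∀ v ∈ V 0 ω, v ≠ 0 →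
      ∃ c : ℝ, c < l ∧ HasExpRateLE (fun n => ‖cocycleProd T a n ω v‖) c)
    (i : Fin k) : lam i < l := by
  obtain ⟨ω, hlt, htendsto, hω⟩ := (hV.lt.and (hV.tendsto.and hslow)).exists
  obtain ⟨v, hv, hvi⟩ := SetLike.exists_of_lt (hlt i)
  have hanti : Antitone fun j => V j ω := Fin.antitone_iff_succ_le.mpr fun j => (hlt j).le
  have hv0 : v ≠ 0 := fun h => hvi (h ▸ zero_mem _)
  obtain ⟨c, hcl, hc⟩ := hω v (hanti (Fin.zero_le _) hv) hv0
  refine lt_of_le_of_lt (not_lt.mp fun hclam => ?_) hcl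
  obtain ⟨x, hcx, hxlam⟩ := EReal.lt_iff_exists_real_btwn.mp hclam
  have hx : HasExpRateGE (fun n => ‖cocycleProd T a n ω v‖) x := .of_tendsto_log_div
    (fun n => norm_cocycleProd_apply_pos T hinj n ω hv0) (htendsto i v hv hvi) hxlam.le
  exact (EReal.coe_lt_coe_iff.mp hcx).not_ge (hx.le_of_hasExpRateLE hc)

end IsLyapunovFiltration

theorem IsInvariantFamily.exists_isLyapunovFiltration [IsProbabilityMeasure μ] {r : ℕ}
    {W : Ω → Submodule ℝ E} (hW : IsInvariantFamily μ T a r W) (hT : Ergodic T μ)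
    (ha : Measurable a) (hinj : ∀ ω, Function.Injective (a ω))
    (hlog : Integrable (fun ω => max (Real.log ‖a ω‖) 0) μ) :
    ∃ (k : ℕ) (lam : Fin k → EReal) (V : Fin (k + 1) → Ω → Submodule ℝ E),
      V 0 = W ∧ IsLyapunovFiltration μ T a lam V := by
  induction r using Nat.strong_induction_on generalizing W with
  | _ r ih =>
  rcases r.eq_zero_or_pos with rfl | hr
  · exact ⟨0, Fin.elim0, fun _ => W, rfl, .nil hW⟩
  obtain ⟨l, r', W', hl, hr', hW', hnext⟩ := hW.exists_next_subfamily hT ha hinj hlog hr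
  obtain ⟨k, lam, V, rfl, hV⟩ := ih r' hr' hW'
  exact ⟨k + 1, Fin.cons l lam, Fin.cons W V, rfl, hV.cons hW hl
    (hV.exponent_lt hinj (hnext.mono fun _ h => h.2.2)) (hnext.mono fun _ h => h.1)
    (hnext.mono fun _ h => h.2.1)⟩

theorem measurableSet_mem_of_measurable_starProjection [MeasurableSpace E] [BorelSpace E]
    {W : Ω → Submodule ℝ E} (hW : Measurable fun ω => (W ω).starProjection) :
    MeasurableSet {p : Ω × E | p.2 ∈ W p.1} := by
  have heval : Measurable fun p : Ω × E => (W p.1).starProjection p.2 :=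
    isBoundedBilinearMap_apply.continuous.measurable.comp
      ((hW.comp measurable_fst).prodMk measurable_snd)
  simpa only [Submodule.starProjection_eq_self_iff] using measurableSet_eq_fun heval measurable_snd

theorem oseledets_multiplicative_ergodic_theorem_general [MeasurableSpace E] [BorelSpace E]
    [Nontrivial E] [IsProbabilityMeasure μ] (hT : Ergodic T μ) (ha : Measurable a)
    (hinj : ∀ ω, Function.Injective (a ω))
    (hlog : Integrable (fun ω => max (Real.log ‖a ω‖) 0) μ) :
    ∃ k : ℕ, 1 ≤ k ∧ ∃ lam : Fin k → EReal, StrictAnti lam ∧ (∀ i, lam i ≠ ⊤) ∧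
      (∀ i : Fin k, (i : ℕ) + 1 < k → lam i ≠ ⊥) ∧
      ∃ V : Fin (k + 1) → Ω → Submodule ℝ E,
        (∀ i, MeasurableSet {p : Ω × E | p.2 ∈ V i p.1}) ∧
        ∀ᵐ ω ∂μ, V 0 ω = ⊤ ∧ V (Fin.last k) ω = ⊥ ∧
          (∀ i : Fin k, V i.succ ω < V i.castSucc ω) ∧
          (∀ i, (V i ω).map (a ω).toLinearMap = V i (T ω)) ∧
          ∀ i : Fin k, ∀ v ∈ V i.castSucc ω, v ∉ V i.succ ω → Tendsto
            (fun n : ℕ => ((Real.log ‖cocycleProd T a n ω v‖ / n : ℝ) : EReal)) atTop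
            (𝓝 (lam i)) := by
  obtain ⟨k, lam, V, hV0, hV⟩ :=
    (isInvariantFamily_top (μ := μ) (T := T) hinj).exists_isLyapunovFiltration hT ha hinj hlog
  refine ⟨k, Nat.one_le_iff_ne_zero.mpr ?_, lam, hV.strictAnti, hV.ne_top, fun i hi => ?_, V,
    fun i => measurableSet_mem_of_measurable_starProjection (hV.measurable i), ?_⟩
  · rintro rfl
    obtain ⟨ω, hω⟩ := hV.last_eq_bot.exists
    exact top_ne_bot ((congrFun hV0 ω).symm.trans hω)
  · exact ne_bot_of_gt (hV.strictAnti (show i < ⟨i + 1, hi⟩ from Nat.lt_succ_self (i : ℕ)))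
  · filter_upwards [hV.last_eq_bot, hV.lt, hV.map_eq, hV.tendsto] with ω hlast hlt hmap htendsto
    exact ⟨congrFun hV0 ω, hlast, hlt, hmap, htendsto⟩

end LyapunovFiltration

section Matrix

variable {Ω : Type*} {d : ℕ}

theorem measurable_toEuclideanCLM [MeasurableSpace Ω] {M : Ω → Matrix (Fin d) (Fin d) ℝ}
    (hM : ∀ i j, Measurable fun ω => M ω i j) :
    Measurable fun ω => Matrix.toEuclideanCLM (𝕜 := ℝ) (M ω) := by
  have hcont : Continuous fun N : Fin d → Fin d → ℝ =>
      Matrix.toEuclideanCLM (n := Fin d) (𝕜 := ℝ) (Matrix.of N) :=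
    LinearMap.continuous_of_finiteDimensional
      ((Matrix.toEuclideanCLM (n := Fin d) (𝕜 := ℝ)).toAlgEquiv.toLinearMap ∘ₗ
        (Matrix.ofLinearEquiv ℝ).toLinearMap)
  exact hcont.measurable.comp (measurable_pi_iff.mpr fun i => measurable_pi_iff.mpr (hM i))

theorem injective_toEuclideanCLM (M : Matrix.GeneralLinearGroup (Fin d) ℝ) :
    Function.Injective (Matrix.toEuclideanCLM (𝕜 := ℝ) (M : Matrix (Fin d) (Fin d) ℝ)) :=
  Function.LeftInverse.injective (g := Matrix.toEuclideanCLM (𝕜 := ℝ)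
    ((M⁻¹ : Matrix.GeneralLinearGroup (Fin d) ℝ) : Matrix (Fin d) (Fin d) ℝ)) fun v => by
    rw [← mul_apply_eq_comp, ← map_mul, Units.inv_mul, map_one, one_apply_eq_self]

theorem cocycleProd_toEuclideanCLM (T : Ω → Ω) (A : Ω → Matrix (Fin d) (Fin d) ℝ) (n : ℕ) (ω : Ω) :
    cocycleProd T (fun ω => Matrix.toEuclideanCLM (𝕜 := ℝ) (A ω)) n ω =
      Matrix.toEuclideanCLM (𝕜 := ℝ) (cocycIter T A n ω) := by
  induction n generalizing ω with
  | zero => exact (map_one _).symm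
  | succ n ih => rw [cocycleProd, ih, cocycIter, map_mul]

end Matrix

/-- **Oseledets Multiplicative Ergodic Theorem.** -/
theorem oseledets_multiplicative_ergodic_theorem
    {Ω : Type*} [MeasurableSpace Ω] {μ : Measure Ω} [IsProbabilityMeasure μ]
    {T : Ω → Ω} (hT : Ergodic T μ) {d : ℕ} (hd : 0 < d)
    (A : Ω → Matrix.GeneralLinearGroup (Fin d) ℝ)
    (hAmeas : ∀ i j, Measurable fun ω => (A ω : Matrix (Fin d) (Fin d) ℝ) i j)
    (hint : Integrable (fun ω =>
      max (Real.log (matOpNorm (A ω : Matrix (Fin d) (Fin d) ℝ))) 0) μ) :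
    ∃ (k : ℕ), 1 ≤ k ∧
    ∃ (lam : Fin k → EReal),
      StrictAnti lam ∧ (∀ i, lam i ≠ ⊤) ∧
      (∀ i : Fin k, (i : ℕ) + 1 < k → lam i ≠ ⊥) ∧
      ∃ V : Fin (k + 1) → Ω → Submodule ℝ (EuclideanSpace ℝ (Fin d)),
        (∀ i : Fin (k + 1),
          MeasurableSet {p : Ω × EuclideanSpace ℝ (Fin d) | p.2 ∈ V i p.1}) ∧
        ∀ᵐ ω ∂μ,
          V 0 ω = ⊤ ∧ V (Fin.last k) ω = ⊥ ∧
          (∀ i : Fin k, V i.succ ω < V i.castSucc ω) ∧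
          (∀ i : Fin (k + 1),
            (V i ω).map (Matrix.toEuclideanLin (A ω : Matrix (Fin d) (Fin d) ℝ)) = V i (T ω)) ∧
          (∀ i : Fin k, ∀ v ∈ V i.castSucc ω, v ∉ V i.succ ω →
            Tendsto
              (fun N : ℕ =>
                ((Real.log ‖Matrix.toEuclideanLin (cocycIter T (fun ω' =>
                    (A ω' : Matrix (Fin d) (Fin d) ℝ)) N ω) v‖ / (N : ℝ) : ℝ) : EReal))
              atTop (𝓝 (lam i))) := by
  have : Nonempty (Fin d) := ⟨⟨0, hd⟩⟩
  have h := oseledets_multiplicative_ergodic_theorem_general hT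
    (measurable_toEuclideanCLM hAmeas) (fun ω => injective_toEuclideanCLM (A ω)) hint
  simp only [cocycleProd_toEuclideanCLM] at h
  exact h
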